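/- arXiv:1909.06542 — 3 statements merged into one kernel-verified Lean document; each statement's English description precedes it below -/
import Mathlib

section
/- Let c > 0, A ≥ 1, B ≥ 1, let M be a positive integer, and let ω ∈ ℝ satisfy the finite Diophantine condition ‖kω‖ > c·|k|^{−A} for all integers k with 0 < |k| ≤ M. Let u : ℝ → ℝ be 1-periodic with |u(x)| ≤ 1 for all x, admitting a subharmonic extension ũ to the strip {z ∈ ℂ : |Im z| < 1} with |ũ(z)| ≤ B. Then there exist σ = σ(A) > 0 (one may take σ = 1/(50A)), c̃ > 0, and M₀ (depending on c, A, B) such that if M ≥ M₀, the Lebesgue measure of the set {x ∈ [0,1] : |∑_{0 ≤ |m| < M} ((M−|m|)/M²)·u(x+mω) − û(0)| > M^{−σ}} is less than e^{−c̃·M^σ}, where û(0) = ∫₀¹ u. -/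
open MeasureTheory


/-- Distance from a real number to the nearest integer. -/
noncomputable def distToInt (θ : ℝ) : ℝ := |θ - round θ|

/-- A continuous function on an open set `U ⊆ ℂ` is subharmonic if its value at the
center of any closed disk contained in `U` is at most its average over the boundary
circle. -/
def Subharmonic (U : Set ℂ) (w : ℂ → ℝ) : Prop :=
  ContinuousOn w U ∧
    ∀ z₀ : ℂ, ∀ r : ℝ, 0 < r → Metric.closedBall z₀ r ⊆ U →
      w z₀ ≤ (2 * Real.pi)⁻¹ *
        ∫ t in (0:ℝ)..(2 * Real.pi), w (z₀ + r * Complex.exp (t * Complex.I))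


namespace LDT
open Real

noncomputable def symAvg (V : ℝ → ℝ → ℝ) (r x y : ℝ) : ℝ :=
  (2 * π)⁻¹ * ∫ t in (0:ℝ)..(2 * π),
    (V (x + r * cos t) (y + r * sin t) + V (x - r * cos t) (y + r * sin t)) / 2

noncomputable def cosInt (V : ℝ → ℝ → ℝ) (y : ℝ) : ℝ :=
  ∫ x in (-(π / 2))..(π / 2), cos x * V x y

/-- swapping for continuous functions -/
lemma swap_cont {E : Type*} [NormedAddCommGroup E] [NormedSpace ℝ E] (F : ℝ → ℝ → E)
    (hF : Continuous fun p : ℝ × ℝ => F p.1 p.2) (a b c d : ℝ) :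
    ∫ x in a..b, ∫ t in c..d, F x t = ∫ t in c..d, ∫ x in a..b, F x t := by
  apply intervalIntegral_intervalIntegral_swap
  · have h1 : IntegrableOn (Function.uncurry F) (Set.uIcc a b ×ˢ Set.uIcc c d) (volume.prod volume) := by
      apply ContinuousOn.integrableOn_compact
      · exact isCompact_uIcc.prod isCompact_uIcc
      · exact hF.continuousOn
    exact h1.mono_set (Set.prod_mono Set.uIoc_subset_uIcc Set.uIoc_subset_uIcc)

lemma avg_mono (f g : ℝ → ℝ) (hf : Continuous f) (hg : Continuous g) (h : ∀ t, f t ≤ g t) :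
    (2 * π)⁻¹ * ∫ t in (0:ℝ)..(2 * π), f t ≤ (2 * π)⁻¹ * ∫ t in (0:ℝ)..(2 * π), g t := by
  apply mul_le_mul_of_nonneg_left _ (by positivity)
  exact intervalIntegral.integral_mono_on (by positivity) (hf.intervalIntegrable _ _)
    (hg.intervalIntegrable _ _) (fun t _ => h t)

lemma avg_const (c : ℝ) : (2 * π)⁻¹ * ∫ _t in (0:ℝ)..(2 * π), c = c := by
  have : π ≠ 0 := pi_ne_zero
  simp; field_simp

lemma avg_sin : ∫ t in (0:ℝ)..(2 * π), sin t = 0 := by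
  simp

lemma avg_sin_sq : ∫ t in (0:ℝ)..(2 * π), sin t ^ 2 = π := by
  rw [integral_sin_sq]; simp

lemma avg_cos_sq : ∫ t in (0:ℝ)..(2 * π), cos t ^ 2 = π := by
  rw [integral_cos_sq]; simp

/-- one-sided shift inequality for the cosine weight -/
lemma cos_shift (φ : ℝ → ℝ) (hc : Continuous φ) (h0 : ∀ x, 0 ≤ φ x) (s : ℝ) (hs : |s| ≤ π / 2) :
    ∫ x in (-(π / 2))..(π / 2), cos (x - s) * φ x ≤
      ∫ x in (-(π / 2))..(π / 2), cos x * φ (x + s) := by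
  have hs' := abs_le.mp hs
  set ψ : ℝ → ℝ := fun x => cos (x - s) * φ x with hψ
  have hψc : Continuous ψ := by fun_prop
  have hi : ∀ a b, IntervalIntegrable ψ volume a b := fun a b => hψc.intervalIntegrable a b
  have e1 : ∫ x in (-(π / 2))..(π / 2), cos x * φ (x + s) =
      ∫ x in (-(π / 2) + s)..(π / 2 + s), ψ x := by
    rw [← intervalIntegral.integral_comp_add_right]
    simp [hψ]
  rw [e1]
  have e2 : ∫ x in (-(π / 2) + s)..(π / 2 + s), ψ x = (∫ x in (-(π / 2))..(π / 2), ψ x)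
      + (∫ x in (π / 2)..(π / 2 + s), ψ x) - ∫ x in (-(π / 2))..(-(π / 2) + s), ψ x := by
    have h1 := intervalIntegral.integral_add_adjacent_intervals (hi (-(π / 2)) (-(π / 2) + s)) (hi (-(π / 2) + s) (π / 2 + s))
    have h2 := intervalIntegral.integral_add_adjacent_intervals (hi (-(π / 2)) (π / 2)) (hi (π / 2) (π / 2 + s))
    linarith
  rw [e2]
  have hpos : ∀ x, -(π/2) ≤ x - s → x - s ≤ π/2 → 0 ≤ ψ x := fun x h1 h2 =>
    mul_nonneg (cos_nonneg_of_neg_pi_div_two_le_of_le h1 h2) (h0 x)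
  have hneg : ∀ x, π/2 ≤ x - s → x - s ≤ π + π/2 → ψ x ≤ 0 := fun x h1 h2 =>
    mul_nonpos_of_nonpos_of_nonneg (cos_nonpos_of_pi_div_two_le_of_le h1 h2) (h0 x)
  have hneg' : ∀ x, x - s ≤ -(π/2) → -(π + π/2) ≤ x - s → ψ x ≤ 0 := fun x h1 h2 => by
    refine mul_nonpos_of_nonpos_of_nonneg ?_ (h0 x)
    rw [← cos_neg]
    exact cos_nonpos_of_pi_div_two_le_of_le (by linarith) (by linarith)
  have hpi := pi_pos
  rcases le_total 0 s with h | h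
  · have a1 : 0 ≤ ∫ x in (π / 2)..(π / 2 + s), ψ x :=
      intervalIntegral.integral_nonneg (by linarith) fun x hx => hpos x (by linarith [hx.1]) (by linarith [hx.2])
    have a2 : 0 ≤ ∫ x in (-(π / 2))..(-(π / 2) + s), -ψ x :=
      intervalIntegral.integral_nonneg (by linarith) fun x hx => by
        have := hneg' x (by linarith [hx.2]) (by linarith [hx.1]); linarith
    rw [intervalIntegral.integral_neg] at a2
    linarith
  · have a1 : 0 ≤ ∫ x in (π / 2 + s)..(π / 2), -ψ x :=
      intervalIntegral.integral_nonneg (by linarith) fun x hx => by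
        have := hneg x (by linarith [hx.1]) (by linarith [hx.2]); linarith
    have a2 : 0 ≤ ∫ x in (-(π / 2) + s)..(-(π / 2)), ψ x :=
      intervalIntegral.integral_nonneg (by linarith) fun x hx => hpos x (by linarith [hx.1]) (by linarith [hx.2])
    rw [intervalIntegral.integral_neg, ← intervalIntegral.integral_symm] at a1
    rw [intervalIntegral.integral_symm] at a2
    linarith

lemma cos_shift2 (φ : ℝ → ℝ) (hc : Continuous φ) (h0 : ∀ x, 0 ≤ φ x) (s : ℝ) (hs : |s| ≤ π / 2) :
    cos s * ∫ x in (-(π / 2))..(π / 2), cos x * φ x ≤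
      ∫ x in (-(π / 2))..(π / 2), cos x * ((φ (x + s) + φ (x - s)) / 2) := by
  have h1 := cos_shift φ hc h0 s hs
  have h2 := cos_shift φ hc h0 (-s) (by rwa [abs_neg])
  simp only [sub_neg_eq_add, ← sub_eq_add_neg] at h2
  have i1 : ∀ f : ℝ → ℝ, Continuous f → IntervalIntegrable f volume (-(π/2)) (π/2) :=
    fun f hf => hf.intervalIntegrable _ _
  have e1 : ∫ x in (-(π / 2))..(π / 2), cos x * ((φ (x + s) + φ (x - s)) / 2) =
     ((∫ x in (-(π / 2))..(π / 2), cos x * φ (x + s)) + ∫ x in (-(π / 2))..(π / 2), cos x * φ (x - s)) / 2 := by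
    rw [← intervalIntegral.integral_add (i1 _ (by fun_prop)) (i1 _ (by fun_prop)),
      ← intervalIntegral.integral_div]
    congr 1; ext x; ring
  have e2 : cos s * ∫ x in (-(π / 2))..(π / 2), cos x * φ x =
     ((∫ x in (-(π / 2))..(π / 2), cos (x - s) * φ x) + ∫ x in (-(π / 2))..(π / 2), cos (x + s) * φ x) / 2 := by
    rw [← intervalIntegral.integral_add (i1 _ (by fun_prop)) (i1 _ (by fun_prop)),
      ← intervalIntegral.integral_div, ← intervalIntegral.integral_const_mul]
    congr 1; ext x; rw [cos_sub, cos_add]; ring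
  rw [e1, e2]; linarith

section
variable (V : ℝ → ℝ → ℝ) (B : ℝ) (hc : Continuous fun p : ℝ × ℝ => V p.1 p.2)
  (h0 : ∀ x y, 0 ≤ V x y) (hB : ∀ x y, V x y ≤ 2 * B)
include hc

lemma cont_comp {X : Type*} [TopologicalSpace X] {f g : X → ℝ} (hf : Continuous f) (hg : Continuous g) :
    Continuous fun x => V (f x) (g x) := hc.comp (hf.prodMk hg)

lemma cont_symAvg (r : ℝ) : Continuous fun p : ℝ × ℝ => symAvg V r p.1 p.2 := by
  unfold symAvg
  apply Continuous.mul continuous_const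
  apply intervalIntegral.continuous_parametric_intervalIntegral_of_continuous'
    (f := fun (p : ℝ × ℝ) t => (V (p.1 + r * cos t) (p.2 + r * sin t) + V (p.1 - r * cos t) (p.2 + r * sin t)) / 2)
  apply Continuous.div_const
  apply Continuous.add
  · exact cont_comp V hc (by fun_prop) (by fun_prop)
  · exact cont_comp V hc (by fun_prop) (by fun_prop)

lemma cont_cosInt : Continuous (cosInt V) := by
  unfold cosInt
  apply intervalIntegral.continuous_parametric_intervalIntegral_of_continuous' (f := fun y x => cos x * V x y)
  exact Continuous.mul (by fun_prop) (cont_comp V hc (by fun_prop) (by fun_prop))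

/-- weighted swap -/
lemma smul_symAvg {E : Type*} [NormedAddCommGroup E] [NormedSpace ℝ E] [CompleteSpace E] (ψ : ℝ → E) (hψ : Continuous ψ)
    (r y a b : ℝ) :
    ∫ x in a..b, symAvg V r x y • ψ x = (2 * π)⁻¹ • ∫ t in (0:ℝ)..(2 * π),
      ∫ x in a..b, ((V (x + r * cos t) (y + r * sin t) + V (x - r * cos t) (y + r * sin t)) / 2) • ψ x := by
  rw [← swap_cont, ← intervalIntegral.integral_smul]
  · congr 1; ext x
    rw [intervalIntegral.integral_smul_const, symAvg, smul_smul]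
  · refine Continuous.smul (Continuous.div_const (Continuous.add ?_ ?_) _) (by fun_prop)
    · exact cont_comp V hc (by fun_prop) (by fun_prop)
    · exact cont_comp V hc (by fun_prop) (by fun_prop)

include h0 hB

lemma cosInt_bound (y : ℝ) : 0 ≤ cosInt V y ∧ cosInt V y ≤ 4 * B := by
  have hcx : ∀ x ∈ Set.Icc (-(π/2)) (π/2), 0 ≤ cos x := fun x hx =>
    cos_nonneg_of_neg_pi_div_two_le_of_le hx.1 hx.2
  have hpi := pi_pos
  constructor
  · exact intervalIntegral.integral_nonneg (by linarith) fun x hx => mul_nonneg (hcx x hx) (h0 _ _)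
  · have : cosInt V y ≤ ∫ x in (-(π / 2))..(π / 2), cos x * (2 * B) := by
      apply intervalIntegral.integral_mono_on (by linarith)
      · exact Continuous.intervalIntegrable (Continuous.mul (by fun_prop) (cont_comp V hc (by fun_prop) (by fun_prop))) _ _
      · exact Continuous.intervalIntegrable (by fun_prop) _ _
      · exact fun x hx => mul_le_mul_of_nonneg_left (hB _ _) (hcx x hx)
    rw [intervalIntegral.integral_mul_const, integral_cos] at this
    simp at this
    linarith

lemma cosInt_symAvg (r y : ℝ) (hr : |r| ≤ 1) :
    (2 * π)⁻¹ * (∫ t in (0:ℝ)..(2 * π), cosInt V (y + r * sin t)) - 2 * B * r ^ 2 ≤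
      ∫ x in (-(π / 2))..(π / 2), cos x * symAvg V r x y := by
  have e := smul_symAvg V hc cos continuous_cos r y (-(π/2)) (π/2)
  simp only [smul_eq_mul, mul_comm _ (cos _)] at e
  have hG := cont_cosInt V hc
  rw [e]
  have e2 : (2 * π)⁻¹ * (∫ t in (0:ℝ)..(2 * π), cosInt V (y + r * sin t)) - 2 * B * r ^ 2
     = (2 * π)⁻¹ * (∫ t in (0:ℝ)..(2 * π), (cosInt V (y + r * sin t) - 2 * B * r ^ 2)) := by
    rw [intervalIntegral.integral_sub (Continuous.intervalIntegrable (by fun_prop) _ _)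
      (Continuous.intervalIntegrable (by fun_prop) _ _), mul_sub, avg_const]
  rw [e2]
  apply avg_mono
  · fun_prop
  · apply intervalIntegral.continuous_parametric_intervalIntegral_of_continuous' (f := fun t x => cos x *
            ((V (x + cos t * r) (y + r * sin t) + V (x - cos t * r) (y + r * sin t)) / 2))
    refine Continuous.mul (by fun_prop) (Continuous.div_const (Continuous.add ?_ ?_) _)
    · exact cont_comp V hc (by fun_prop) (by fun_prop)
    · exact cont_comp V hc (by fun_prop) (by fun_prop)
  · intro t
    have hs : |cos t * r| ≤ 1 := by
      rw [abs_mul]; nlinarith [abs_cos_le_one t, abs_nonneg (cos t), abs_nonneg r]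
    have := cos_shift2 (fun x => V x (y + r * sin t)) (cont_comp V hc (by fun_prop) (by fun_prop)) (fun x => h0 _ _)
      (cos t * r) (by linarith [two_le_pi])
    refine le_trans ?_ this
    change _ ≤ cos (cos t * r) * cosInt V (y + r * sin t)
    have hb := cosInt_bound V B hc h0 hB (y + r * sin t)
    have h3 : 1 - r ^ 2 / 2 ≤ cos (cos t * r) := by
      refine le_trans ?_ one_sub_sq_div_two_le_cos
      have : (cos t * r) ^ 2 ≤ r ^ 2 := by
        rw [mul_pow]; nlinarith [cos_sq_le_one t, sq_nonneg r]
      linarith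
    nlinarith [sq_nonneg r]

end

/-- 1D maximum principle: Lipschitz lower bound. -/
lemma max_principle (G : ℝ → ℝ) (B : ℝ) (hBpos : 0 < B) (hG : Continuous G) (hb : ∀ y, 0 ≤ G y ∧ G y ≤ 4 * B)
    (hsub : ∀ y r, 0 < r → |y| + r ≤ 7/8 →
      (2 * π)⁻¹ * (∫ t in (0:ℝ)..(2 * π), G (y + r * sin t)) - 2 * B * r ^ 2 ≤ G y)
    (y : ℝ) (hy : |y| ≤ 1/2) (z : ℝ) (hz : |z - y| ≤ 1/4) : G y - 20 * B * |z - y| ≤ G z := by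
  set h : ℝ → ℝ := fun z => G y - G z - 20 * B * |z - y| + 5 * B * (z - y) ^ 2 with hh
  have hcont : Continuous h := by fun_prop
  obtain ⟨s, hs, hmax⟩ := (isCompact_Icc (a := y - 1/4) (b := y + 1/4)).exists_isMaxOn
    ⟨y, by constructor <;> linarith⟩ hcont.continuousOn
  have key : h s ≤ 0 := by
    by_contra! hpos
    have hs' : |s - y| ≤ 1/4 := abs_le.mpr ⟨by linarith [hs.1], by linarith [hs.2]⟩
    have hne : 0 < |s - y| := by
      rw [abs_pos]; intro h1
      simp [hh, sub_eq_zero.mp h1] at hpos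
    have hlt : |s - y| < 1/4 := by
      rcases lt_or_eq_of_le hs' with h1 | h1
      · exact h1
      · exfalso
        have : h s ≤ 0 := by
          simp only [hh]; rw [← sq_abs (s - y), h1]; linarith [hb y, hb s]
        linarith
    set r := min |s - y| (1/4 - |s - y|) with hr
    have hr0 : 0 < r := lt_min hne (by linarith)
    have hr1 : r ≤ |s - y| := min_le_left _ _
    have hr2 : r ≤ 1/4 - |s - y| := min_le_right _ _
    have hsy : |s| ≤ |s - y| + |y| := by
      calc |s| = |(s - y) + y| := by ring_nf
        _ ≤ _ := abs_add_le _ _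
    have h1 := hsub s r hr0 (by linarith)
    obtain ⟨ε, hε, hsε⟩ : ∃ ε : ℝ, |ε| = 1 ∧ |s - y| = ε * (s - y) := by
      rcases le_total 0 (s - y) with h2 | h2
      · exact ⟨1, by simp, by simp [abs_of_nonneg h2]⟩
      · exact ⟨-1, by simp, by simp [abs_of_nonpos h2]⟩
    have hrs : ∀ t, |r * sin t| ≤ r := fun t => by
      rw [abs_mul, abs_of_pos hr0]; nlinarith [abs_sin_le_one t]
    have habs : ∀ t, |s + r * sin t - y| = |s - y| + ε * (r * sin t) := by
      intro t
      have h3 : |ε * (r * sin t)| ≤ r := by rw [abs_mul, hε, one_mul]; exact hrs t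
      have h4 := abs_le.mp h3
      have h5 : s + r * sin t - y = ε * (|s - y| + ε * (r * sin t)) := by
        have : ε * ε = 1 := by rw [← abs_mul_abs_self, hε]; norm_num
        rw [hsε]; linear_combination -(s - y + r * sin t) * this
      rw [h5, abs_mul, hε, one_mul, abs_of_nonneg (by linarith)]
    have hle : ∀ t, h (s + r * sin t) ≤ h s := by
      intro t
      apply hmax
      have h3 := abs_le.mp (hrs t)
      have h4 := abs_le.mp (le_refl |s - y|)
      constructor <;> linarith
    have h6 := avg_mono (fun t => h (s + r * sin t)) (fun _ => h s) (by fun_prop) (by fun_prop) hle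
    rw [avg_const] at h6
    obtain ⟨c0, hc0⟩ : ∃ c0, c0 = h s + G s := ⟨_, rfl⟩
    have h7 : (fun t => h (s + r * sin t)) = fun t => (c0 - G (s + r * sin t)) +
        ((10 * B * (s - y) - 20 * B * ε) * r * sin t + 5 * B * r ^ 2 * sin t ^ 2) := by
      ext t
      rw [hc0]
      simp only [hh]
      rw [habs]; ring
    rw [h7] at h6
    rw [intervalIntegral.integral_add (Continuous.intervalIntegrable (by fun_prop) _ _)
      (Continuous.intervalIntegrable (by fun_prop) _ _),
      intervalIntegral.integral_sub (Continuous.intervalIntegrable (by fun_prop) _ _)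
      (Continuous.intervalIntegrable (by fun_prop) _ _),
      intervalIntegral.integral_add (Continuous.intervalIntegrable (by fun_prop) _ _)
      (Continuous.intervalIntegrable (by fun_prop) _ _),
      intervalIntegral.integral_const_mul, intervalIntegral.integral_const_mul, avg_sin, avg_sin_sq,
      mul_add, mul_sub, avg_const] at h6
    have h8 : (2 * π)⁻¹ * ((10 * B * (s - y) - 20 * B * ε) * r * 0 + 5 * B * r ^ 2 * π) = 5/2 * B * r ^ 2 := by
      have := pi_ne_zero
      field_simp; ring
    rw [h8] at h6
    have : 0 < B * r ^ 2 := by positivity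
    linarith
  have h2 : h z ≤ h s := hmax ⟨by linarith [(abs_le.mp hz).1], by linarith [(abs_le.mp hz).2]⟩
  have h3 : h z ≤ 0 := h2.trans key
  simp only [hh] at h3
  nlinarith [sq_nonneg (z - y)]

end LDT

namespace LDT
open Real

section
variable (V : ℝ → ℝ → ℝ) (B : ℝ) (hBpos : 0 < B) (hc : Continuous fun p : ℝ × ℝ => V p.1 p.2)
  (h0 : ∀ x y, 0 ≤ V x y) (hB : ∀ x y, V x y ≤ 2 * B)
  (hsub : ∀ x y r, 0 < r → |y| + r ≤ 7/8 → symAvg V r x y ≤ V x y)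
include hBpos hc h0 hB hsub

lemma cosInt_sub (y r : ℝ) (hr : 0 < r) (hy : |y| + r ≤ 7/8) :
    (2 * π)⁻¹ * (∫ t in (0:ℝ)..(2 * π), cosInt V (y + r * sin t)) - 2 * B * r ^ 2 ≤ cosInt V y := by
  refine (cosInt_symAvg V B hc h0 hB r y (by rw [abs_of_pos hr]; linarith [abs_nonneg y])).trans ?_
  have hsc := cont_symAvg V hc r
  apply intervalIntegral.integral_mono_on (by linarith [pi_pos])
  · exact Continuous.intervalIntegrable (Continuous.mul (by fun_prop) (hsc.comp (by fun_prop : Continuous fun x : ℝ => (x, y)))) _ _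
  · exact Continuous.intervalIntegrable (Continuous.mul (by fun_prop) (cont_comp V hc (by fun_prop) (by fun_prop))) _ _
  · exact fun x hx => mul_le_mul_of_nonneg_left (hsub x y r hr hy) (cos_nonneg_of_neg_pi_div_two_le_of_le hx.1 hx.2)

lemma E_bound (y r : ℝ) (hr : 0 < r) (hr4 : r ≤ 1/4) (hy : |y| ≤ 1/2) :
    ∫ x in (-(1/2 : ℝ))..(1/2), (V x y - symAvg V r x y) ≤ 44 * B * r := by
  have hsc : Continuous fun x => symAvg V r x y :=
    (cont_symAvg V hc r).comp (by fun_prop : Continuous fun x : ℝ => (x, y))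
  have hVc : Continuous fun x => V x y := cont_comp V hc (by fun_prop) (by fun_prop)
  have hGc := cont_cosInt V hc
  set D : ℝ → ℝ := fun x => V x y - symAvg V r x y with hD
  have hDc : Continuous D := hVc.sub hsc
  have hD0 : ∀ x, 0 ≤ D x := fun x => sub_nonneg.mpr (hsub x y r hr (by linarith))
  have hpi := two_le_pi
  have s1 : ∫ x in (-(1/2 : ℝ))..(1/2), D x ≤ ∫ x in (-(1/2 : ℝ))..(1/2), 2 * (cos x * D x) := by
    apply intervalIntegral.integral_mono_on (by norm_num)
    · exact hDc.intervalIntegrable _ _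
    · exact Continuous.intervalIntegrable (by fun_prop) _ _
    · intro x hx
      have : 1 - x ^ 2 / 2 ≤ cos x := one_sub_sq_div_two_le_cos
      have : x ^ 2 ≤ 1 := by nlinarith [hx.1, hx.2]
      nlinarith [hD0 x]
  have s2 : ∫ x in (-(1/2 : ℝ))..(1/2), 2 * (cos x * D x) ≤ ∫ x in (-(π/2))..(π/2), 2 * (cos x * D x) := by
    apply intervalIntegral.integral_mono_interval (by linarith) (by norm_num) (by linarith)
    · refine (ae_restrict_iff' measurableSet_Ioc).mpr (Filter.Eventually.of_forall fun x hx => ?_)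
      exact mul_nonneg (by norm_num) (mul_nonneg (cos_nonneg_of_neg_pi_div_two_le_of_le hx.1.le hx.2) (hD0 x))
    · exact Continuous.intervalIntegrable (by fun_prop) _ _
  have s3 : ∫ x in (-(π/2))..(π/2), 2 * (cos x * D x) = 2 * (cosInt V y - ∫ x in (-(π/2))..(π/2), cos x * symAvg V r x y) := by
    rw [intervalIntegral.integral_const_mul, cosInt, ← intervalIntegral.integral_sub
      (Continuous.intervalIntegrable (by fun_prop) _ _) (Continuous.intervalIntegrable (by fun_prop) _ _)]
    congr 2; ext x; simp only [hD]; ring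
  have s4 := cosInt_symAvg V B hc h0 hB r y (by rw [abs_of_pos hr]; linarith)
  have s5 : cosInt V y - 20 * B * r ≤ (2 * π)⁻¹ * (∫ t in (0:ℝ)..(2 * π), cosInt V (y + r * sin t)) := by
    rw [← avg_const (cosInt V y - 20 * B * r)]
    apply avg_mono _ _ (by fun_prop) (by fun_prop)
    intro t
    have hrs : |y + r * sin t - y| ≤ r := by
      rw [add_sub_cancel_left, abs_mul, abs_of_pos hr]; nlinarith [abs_sin_le_one t]
    have := max_principle (cosInt V) B hBpos hGc (cosInt_bound V B hc h0 hB)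
      (cosInt_sub V B hBpos hc h0 hB hsub) y hy (y + r * sin t) (by linarith)
    nlinarith
  have : B * r ^ 2 ≤ B * r := by nlinarith [mul_pos hBpos hr]
  linarith

end

lemma shift_err (φ : ℝ → ℝ) (B : ℝ) (hφ : Continuous φ) (h0 : ∀ x, 0 ≤ φ x) (hB : ∀ x, φ x ≤ 2 * B)
    (ψ : ℝ → ℂ) (hψ : Continuous ψ) (hψ1 : ∀ x, ‖ψ x‖ ≤ 1) (s a b : ℝ) :
    ‖(∫ x in a..b, φ (x + s) • ψ x) - ∫ x in a..b, φ x • ψ (x - s)‖ ≤ 4 * B * |s| := by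
  set F : ℝ → ℂ := fun x => φ x • ψ (x - s) with hF
  have hFc : Continuous F := by fun_prop
  have hi : ∀ a b, IntervalIntegrable F volume a b := fun a b => hFc.intervalIntegrable a b
  have e1 : ∫ x in a..b, φ (x + s) • ψ x = ∫ x in (a + s)..(b + s), F x := by
    rw [← intervalIntegral.integral_comp_add_right]
    simp [hF]
  have e2 : (∫ x in (a + s)..(b + s), F x) - ∫ x in a..b, F x =
      (∫ x in b..(b + s), F x) - ∫ x in a..(a + s), F x := by
    have h1 := intervalIntegral.integral_add_adjacent_intervals (hi a (a + s)) (hi (a + s) (b + s))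
    have h2 := intervalIntegral.integral_add_adjacent_intervals (hi a b) (hi b (b + s))
    linear_combination h1 - h2
  have hn : ∀ x, ‖F x‖ ≤ 2 * B := fun x => by
    simp only [hF]
    rw [norm_smul, norm_of_nonneg (h0 x)]
    have := hψ1 (x - s)
    nlinarith [h0 x, hB x, norm_nonneg (ψ (x - s))]
  have b1 : ∀ c, ‖∫ x in c..(c + s), F x‖ ≤ 2 * B * |s| := fun c => by
    have := intervalIntegral.norm_integral_le_of_norm_le_const (a := c) (b := c + s) (f := F) (C := 2 * B) (fun x _ => hn x)
    simpa using this
  rw [e1, e2]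
  refine (norm_sub_le _ _).trans ?_
  linarith [b1 a, b1 b]

noncomputable def chr (k : ℤ) (x : ℝ) : ℂ := Complex.exp ((-(2 * π * k * x) : ℝ) * Complex.I)

lemma chr_cont (k : ℤ) : Continuous (chr k) := by unfold chr; fun_prop

lemma chr_norm (k : ℤ) (x : ℝ) : ‖chr k x‖ = 1 := by
  unfold chr; exact Complex.norm_exp_ofReal_mul_I _

lemma chr_sum (k : ℤ) (x s : ℝ) : chr k (x - s) + chr k (x + s) = (2 * cos (2 * π * k * s)) • chr k x := by
  unfold chr
  have h1 : ((-(2 * π * k * (x - s)) : ℝ) : ℂ) * Complex.I = ((-(2 * π * k * x) : ℝ) : ℂ) * Complex.I + ((2 * π * k * s : ℝ) : ℂ) * Complex.I := by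
    push_cast; ring
  have h2 : ((-(2 * π * k * (x + s)) : ℝ) : ℂ) * Complex.I = ((-(2 * π * k * x) : ℝ) : ℂ) * Complex.I + -((2 * π * k * s : ℝ) : ℂ) * Complex.I := by
    push_cast; ring
  rw [h1, h2, Complex.exp_add, Complex.exp_add, ← mul_add, Complex.real_smul, Complex.ofReal_mul 2,
    Complex.ofReal_cos, Complex.ofReal_ofNat, Complex.two_cos]
  ring

noncomputable def bb (V : ℝ → ℝ → ℝ) (k : ℤ) (y : ℝ) : ℂ := ∫ x in (-(1/2 : ℝ))..(1/2), V x y • chr k x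

lemma q_bound : (2 * π)⁻¹ * ∫ t in (0:ℝ)..(2 * π), cos (cos t) ≤ 1 - 1 / π ^ 2 := by
  have h := avg_mono (fun t => cos (cos t)) (fun t => 1 - 2 / π ^ 2 * cos t ^ 2) (by fun_prop) (by fun_prop)
    (fun t => cos_le_one_sub_mul_cos_sq (by linarith [abs_cos_le_one t, two_le_pi]))
  rw [intervalIntegral.integral_sub (Continuous.intervalIntegrable (by fun_prop) _ _) (Continuous.intervalIntegrable (by fun_prop) _ _), mul_sub, avg_const, intervalIntegral.integral_const_mul, avg_cos_sq] at h
  have : (2 * π)⁻¹ * (2 / π ^ 2 * π) = 1 / π ^ 2 := by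
    have := pi_ne_zero
    field_simp
  rw [this] at h
  exact h

section
variable (V : ℝ → ℝ → ℝ) (B : ℝ) (hBpos : 0 < B) (hc : Continuous fun p : ℝ × ℝ => V p.1 p.2)
  (h0 : ∀ x y, 0 ≤ V x y) (hB : ∀ x y, V x y ≤ 2 * B)
  (hsub : ∀ x y r, 0 < r → |y| + r ≤ 7/8 → symAvg V r x y ≤ V x y)
include hc

lemma bb_cont (k : ℤ) : Continuous (bb V k) := by
  unfold bb
  apply intervalIntegral.continuous_parametric_intervalIntegral_of_continuous' (f := fun y x => V x y • chr k x)
  have := chr_cont k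
  exact Continuous.smul (cont_comp V hc (by fun_prop) (by fun_prop)) (by fun_prop)

include h0 hB

lemma bb_le (k : ℤ) (y : ℝ) : ‖bb V k y‖ ≤ 2 * B := by
  have := intervalIntegral.norm_integral_le_of_norm_le_const (a := -(1/2)) (b := 1/2)
    (f := fun x => V x y • chr k x) (C := 2 * B) (fun x _ => by
      rw [norm_smul, chr_norm, mul_one, norm_of_nonneg (h0 _ _)]; exact hB _ _)
  refine this.trans (le_of_eq ?_)
  norm_num

lemma bb_shift (k : ℤ) (y s : ℝ) :
    ‖∫ x in (-(1/2 : ℝ))..(1/2), ((V (x + s) y + V (x - s) y) / 2) • chr k x‖ ≤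
      |cos (2 * π * k * s)| * ‖bb V k y‖ + 4 * B * |s| := by
  have hk := chr_cont k
  have hV : Continuous fun x => V x y := cont_comp V hc (by fun_prop) (by fun_prop)
  have e1 := shift_err (fun x => V x y) B hV (fun x => h0 x y) (fun x => hB x y) (chr k) hk
    (fun x => (chr_norm k x).le) s (-(1/2)) (1/2)
  have e2 := shift_err (fun x => V x y) B hV (fun x => h0 x y) (fun x => hB x y) (chr k) hk
    (fun x => (chr_norm k x).le) (-s) (-(1/2)) (1/2)
  simp only [sub_neg_eq_add, ← sub_eq_add_neg, abs_neg] at e2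
  have i1 : ∀ f : ℝ → ℂ, Continuous f → IntervalIntegrable f volume (-(1/2)) (1/2) :=
    fun f hf => hf.intervalIntegrable _ _
  have h1 : ∫ x in (-(1/2 : ℝ))..(1/2), ((V (x + s) y + V (x - s) y) / 2) • chr k x =
      (1/2 : ℝ) • ((∫ x in (-(1/2 : ℝ))..(1/2), V (x + s) y • chr k x) + ∫ x in (-(1/2 : ℝ))..(1/2), V (x - s) y • chr k x) := by
    rw [← intervalIntegral.integral_add (i1 _ (by fun_prop)) (i1 _ (by fun_prop)), ← intervalIntegral.integral_smul]
    congr 1; ext x; simp only [Complex.real_smul]; push_cast; ring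
  have h2 : cos (2 * π * k * s) • bb V k y =
      (1/2 : ℝ) • ((∫ x in (-(1/2 : ℝ))..(1/2), V x y • chr k (x - s)) + ∫ x in (-(1/2 : ℝ))..(1/2), V x y • chr k (x + s)) := by
    rw [← intervalIntegral.integral_add (i1 _ (by fun_prop)) (i1 _ (by fun_prop)), ← intervalIntegral.integral_smul, bb,
      ← intervalIntegral.integral_smul]
    congr 1; ext x; rw [← smul_add, chr_sum]; simp only [Complex.real_smul]; push_cast; ring
  rw [← norm_eq_abs (cos _), ← norm_smul]
  set X := ∫ x in (-(1/2 : ℝ))..(1/2), ((V (x + s) y + V (x - s) y) / 2) • chr k x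
  have h3 : ‖X - cos (2 * π * k * s) • bb V k y‖ ≤ 4 * B * |s| := by
    rw [h1, h2, ← smul_sub, norm_smul, add_sub_add_comm]
    have := norm_add_le_of_le e1 e2
    norm_num at this ⊢
    linarith
  have := norm_le_norm_add_norm_sub' X (cos (2 * π * k * s) • bb V k y)
  linarith

include hBpos hsub

lemma bb_step (k : ℤ) (r : ℝ) (hr : 0 < r) (hr4 : r ≤ 1/4) (hkr : |2 * π * k * r| = 1) (y : ℝ) (hy : |y| ≤ 1/2)
    (S : ℝ) (hS : ∀ z, |z - y| ≤ r → ‖bb V k z‖ ≤ S) :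
    ‖bb V k y‖ ≤ (1 - 1 / π ^ 2) * S + 48 * B * r := by
  have hk := chr_cont k
  have hbc := bb_cont V hc k
  have hsc : Continuous fun x => symAvg V r x y :=
    (cont_symAvg V hc r).comp (by fun_prop : Continuous fun x : ℝ => (x, y))
  have hVc : Continuous fun x => V x y := cont_comp V hc (by fun_prop) (by fun_prop)
  have i1 : ∀ f : ℝ → ℂ, Continuous f → IntervalIntegrable f volume (-(1/2)) (1/2) :=
    fun f hf => hf.intervalIntegrable _ _
  have e1 : bb V k y = (∫ x in (-(1/2 : ℝ))..(1/2), symAvg V r x y • chr k x) +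
      ∫ x in (-(1/2 : ℝ))..(1/2), (V x y - symAvg V r x y) • chr k x := by
    rw [← intervalIntegral.integral_add (i1 _ (by fun_prop)) (i1 _ (by fun_prop)), bb]
    congr 1; ext x; rw [← add_smul]; congr 1; ring
  have e2 : ‖∫ x in (-(1/2 : ℝ))..(1/2), (V x y - symAvg V r x y) • chr k x‖ ≤ 44 * B * r := by
    refine le_trans ?_ (E_bound V B hBpos hc h0 hB hsub y r hr hr4 hy)
    refine (intervalIntegral.norm_integral_le_integral_norm (by norm_num)).trans (le_of_eq ?_)
    congr 1; ext x
    rw [norm_smul, chr_norm, mul_one, norm_of_nonneg (sub_nonneg.mpr (hsub x y r hr (by linarith)))]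
  have e3 : ‖∫ x in (-(1/2 : ℝ))..(1/2), symAvg V r x y • chr k x‖ ≤ (1 - 1 / π ^ 2) * S + 4 * B * r := by
    rw [smul_symAvg V hc _ hk, norm_smul, norm_of_nonneg (by positivity : (0:ℝ) ≤ (2 * π)⁻¹)]
    have hS0 : 0 ≤ S := (norm_nonneg _).trans (hS y (by simp [hr.le]))
    have hbd : ∀ t ∈ Set.Ioc 0 (2 * π), ‖∫ x in (-(1/2 : ℝ))..(1/2), ((V (x + r * cos t) (y + r * sin t) + V (x - r * cos t) (y + r * sin t)) / 2) • chr k x‖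
        ≤ S * cos (cos t) + 4 * B * r := by
      intro t _
      refine (bb_shift V B hc h0 hB k (y + r * sin t) (r * cos t)).trans ?_
      have hrs : |y + r * sin t - y| ≤ r := by
        rw [add_sub_cancel_left, abs_mul, abs_of_pos hr]; nlinarith [abs_sin_le_one t]
      have hrc : |r * cos t| ≤ r := by
        rw [abs_mul, abs_of_pos hr]; nlinarith [abs_cos_le_one t]
      have hcc : 0 ≤ cos (cos t) := cos_nonneg_of_neg_pi_div_two_le_of_le
        (by linarith [neg_one_le_cos t, two_le_pi]) (by linarith [cos_le_one t, two_le_pi])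
      have hcos : |cos (2 * π * k * (r * cos t))| = cos (cos t) := by
        rw [← cos_abs (2 * π * k * (r * cos t)), ← mul_assoc, abs_mul, hkr, one_mul, cos_abs, abs_of_nonneg hcc]
      rw [hcos]
      have := hS _ hrs
      nlinarith
    have := intervalIntegral.norm_integral_le_of_norm_le (μ := volume) (by positivity : (0:ℝ) ≤ 2 * π)
      (Filter.Eventually.of_forall hbd) (Continuous.intervalIntegrable (by fun_prop) _ _)
    refine (mul_le_mul_of_nonneg_left this (by positivity)).trans ?_
    rw [intervalIntegral.integral_add (Continuous.intervalIntegrable (by fun_prop) _ _) (Continuous.intervalIntegrable (by fun_prop) _ _), mul_add, avg_const, intervalIntegral.integral_const_mul]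
    nlinarith [q_bound]
  rw [e1]
  refine (norm_add_le _ _).trans ?_
  linarith

lemma bb_decay (k : ℤ) (hk : k ≠ 0) : ‖bb V k 0‖ ≤ 1000 * B / |(k:ℝ)| := by
  have hkpos : (0:ℝ) < |(k:ℝ)| := by positivity
  have hk1 : (1:ℝ) ≤ |(k:ℝ)| := by
    rw [← Int.cast_abs]; exact_mod_cast Int.one_le_abs hk
  set r : ℝ := 1 / (2 * π * |(k:ℝ)|) with hr
  have hpi := pi_gt_three
  have hpi' := pi_lt_d2
  have hr0 : 0 < r := by positivity
  have hr4 : r ≤ 1/4 := by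
    rw [hr]; apply one_div_le_one_div_of_le (by norm_num); nlinarith
  have hkr : |2 * π * k * r| = 1 := by
    rw [abs_mul, abs_mul, abs_of_pos (by positivity : 0 < 2 * π), abs_of_pos hr0, hr]; field_simp
  set q : ℝ := 1 - 1 / π ^ 2 with hq
  have hq0 : 0 ≤ q := by
    rw [hq, sub_nonneg, div_le_one (by positivity)]; nlinarith
  have ind : ∀ n : ℕ, ∀ y, |y| + n * r ≤ 1/2 → ‖bb V k y‖ ≤ q ^ n * (2 * B) + π ^ 2 * (48 * B * r) := by
    intro n
    induction n with
    | zero =>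
      intro y _
      have := bb_le V B hc h0 hB k y
      have : 0 ≤ π ^ 2 * (48 * B * r) := by positivity
      simp; linarith
    | succ n ih =>
      intro y hy
      push_cast at hy
      have hnr : 0 ≤ n * r := by positivity
      have := bb_step V B hBpos hc h0 hB hsub k r hr0 hr4 hkr y (by linarith) _ (fun z hz => ih z (by
        have : |z| ≤ |z - y| + |y| := by
          calc |z| = |(z - y) + y| := by ring_nf
            _ ≤ _ := abs_add_le _ _
        linarith))
      refine this.trans (le_of_eq ?_)
      rw [← hq, pow_succ]
      have h9 : q * π ^ 2 = π ^ 2 - 1 := by rw [hq]; field_simp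
      linear_combination (48 * B * r) * h9
  have hn : ((k.natAbs : ℕ) : ℝ) = |(k:ℝ)| := by rw [Nat.cast_natAbs, Int.cast_abs]
  have h1 := ind k.natAbs 0 (by
    rw [hn, hr, abs_zero, zero_add, ← div_eq_mul_one_div, div_le_iff₀ (by positivity)]
    nlinarith)
  have h2 : ∀ n : ℕ, (n:ℝ) * q ^ n ≤ π ^ 2 := by
    intro n
    have hb := one_add_mul_le_pow (a := 1 / π ^ 2) (by linarith [show (0:ℝ) ≤ 1 / π^2 by positivity]) n
    have h3 : q ^ n * (1 + 1 / π ^ 2) ^ n ≤ 1 := by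
      rw [← mul_pow]; apply pow_le_one₀
      · positivity
      · rw [hq]; nlinarith [sq_nonneg (1 / π ^ 2)]
    have hqn : 0 ≤ q ^ n := by positivity
    have h4 : q ^ n * (n * (1 / π ^ 2)) ≤ 1 := by nlinarith
    rw [← mul_assoc, ← div_eq_mul_one_div, div_le_one (by positivity)] at h4
    linarith
  have h3 := h2 k.natAbs
  rw [hn] at h3
  rw [le_div_iff₀ hkpos]
  have h5 : r * |(k:ℝ)| = 1 / (2 * π) := by rw [hr]; field_simp
  have h6 : π ^ 2 * (48 * B * r) * |(k:ℝ)| = 24 * B * π := by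
    rw [show π ^ 2 * (48 * B * r) * |(k:ℝ)| = π ^ 2 * 48 * B * (r * |(k:ℝ)|) by ring, h5]; field_simp; norm_num
  calc ‖bb V k 0‖ * |(k:ℝ)| ≤ (q ^ k.natAbs * (2 * B) + π ^ 2 * (48 * B * r)) * |(k:ℝ)| := by gcongr
    _ = 2 * B * (|(k:ℝ)| * q ^ k.natAbs) + 24 * B * π := by rw [add_mul, h6]; ring
    _ ≤ 2 * B * π ^ 2 + 24 * B * π := by gcongr
    _ ≤ 1000 * B := by nlinarith [mul_pos hBpos pi_pos]

end
end LDT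

namespace LDT
open Real

lemma symAvg_eq (V : ℝ → ℝ → ℝ) (hc : Continuous fun p : ℝ × ℝ => V p.1 p.2) (r x y : ℝ) :
    symAvg V r x y = (2 * π)⁻¹ * ∫ t in (0:ℝ)..(2 * π), V (x + r * cos t) (y + r * sin t) := by
  have c1 : Continuous fun t => V (x + r * cos t) (y + r * sin t) := cont_comp V hc (by fun_prop) (by fun_prop)
  have c2 : Continuous fun t => V (x - r * cos t) (y + r * sin t) := cont_comp V hc (by fun_prop) (by fun_prop)
  have hp : Function.Periodic (fun t => V (x + r * cos t) (y + r * sin t)) (2 * π) := by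
    intro t; simp
  have e1 : ∫ t in (0:ℝ)..(2 * π), V (x - r * cos t) (y + r * sin t) =
      ∫ t in (0:ℝ)..(2 * π), V (x + r * cos t) (y + r * sin t) := by
    have h1 := intervalIntegral.integral_comp_sub_left (a := 0) (b := 2 * π)
      (fun t => V (x + r * cos t) (y + r * sin t)) π
    simp only [cos_pi_sub, sin_pi_sub, mul_neg, ← sub_eq_add_neg] at h1
    rw [h1]
    have h2 := hp.intervalIntegral_add_eq (π - 2 * π) 0
    rw [zero_add] at h2
    rw [← h2]
    congr 1; ring
  rw [symAvg, intervalIntegral.integral_div, intervalIntegral.integral_add (c1.intervalIntegrable _ _)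
    (c2.intervalIntegrable _ _), e1]
  ring

lemma bb_const (B : ℝ) (hB : 0 < B) (k : ℤ) (hk : k ≠ 0) :
    ‖bb (fun _ _ => B) k 0‖ ≤ 1000 * B / |(k:ℝ)| := by
  apply bb_decay _ B hB continuous_const (fun _ _ => hB.le) (fun _ _ => by linarith) _ k hk
  intro x y r _ _
  rw [symAvg_eq _ continuous_const, avg_const]

noncomputable def clampY (y : ℝ) : ℝ := max (-(7/8)) (min y (7/8))

lemma clampY_abs (y : ℝ) : |clampY y| < 1 := by
  unfold clampY
  rw [abs_lt]
  constructor
  · exact lt_of_lt_of_le (by norm_num) (le_max_left _ _)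
  · apply max_lt (by norm_num); exact lt_of_le_of_lt (min_le_right _ _) (by norm_num)

lemma clampY_eq (y : ℝ) (h : |y| ≤ 7/8) : clampY y = y := by
  unfold clampY
  rw [abs_le] at h
  rw [min_eq_left h.2, max_eq_right h.1]

lemma clampY_cont : Continuous clampY := by unfold clampY; fun_prop

lemma coef_bound (B : ℝ) (hB1 : 1 ≤ B) (w : ℂ → ℝ)
    (hw : Subharmonic {z : ℂ | |z.im| < 1} w)
    (hb : ∀ z : ℂ, |z.im| < 1 → |w z| ≤ B) (k : ℤ) (hk : k ≠ 0) :
    ‖∫ x in (-(1/2 : ℝ))..(1/2), w x • chr k x‖ ≤ 2000 * B / |(k:ℝ)| := by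
  have hBpos : 0 < B := by linarith
  set V : ℝ → ℝ → ℝ := fun x y => B - w ⟨x, clampY y⟩ with hV
  have hwc : Continuous fun p : ℝ × ℝ => w ⟨p.1, clampY p.2⟩ := by
    apply hw.1.comp_continuous
    · have : (fun p : ℝ × ℝ => (⟨p.1, clampY p.2⟩ : ℂ)) = fun p => (p.1 : ℂ) + (clampY p.2 : ℂ) * Complex.I := by
        ext p; apply Complex.ext <;> simp
      rw [this]
      have := clampY_cont
      fun_prop
    · intro p; exact clampY_abs _
  have hVc : Continuous fun p : ℝ × ℝ => V p.1 p.2 := by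
    simp only [hV]; exact continuous_const.sub hwc
  have hwb : ∀ x y, |w ⟨x, clampY y⟩| ≤ B := fun x y => hb _ (clampY_abs _)
  have h0 : ∀ x y, 0 ≤ V x y := fun x y => by
    simp only [hV]; linarith [(abs_le.mp (hwb x y)).2]
  have h2 : ∀ x y, V x y ≤ 2 * B := fun x y => by
    simp only [hV]; linarith [(abs_le.mp (hwb x y)).1]
  have hsub : ∀ x y r, 0 < r → |y| + r ≤ 7/8 → symAvg V r x y ≤ V x y := by
    intro x y r hr hy
    rw [symAvg_eq V hVc]
    have hcl : ∀ t, clampY (y + r * sin t) = y + r * sin t := fun t => by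
      apply clampY_eq
      refine (abs_add_le _ _).trans ?_
      rw [abs_mul, abs_of_pos hr]
      nlinarith [abs_sin_le_one t]
    have hcl0 : clampY y = y := clampY_eq y (by linarith)
    have h3 := hw.2 ⟨x, y⟩ r hr (by
      intro z hz
      rw [Metric.mem_closedBall, dist_eq_norm] at hz
      have h4 := (Complex.abs_im_le_norm (z - ⟨x, y⟩)).trans hz
      simp only [Complex.sub_im] at h4
      have : |z.im| ≤ |z.im - y| + |y| := by
        calc |z.im| = |(z.im - y) + y| := by ring_nf
          _ ≤ _ := abs_add_le _ _
      simp only [Set.mem_setOf_eq]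
      linarith)
    have e1 : ∀ t : ℝ, (⟨x, y⟩ : ℂ) + r * Complex.exp (t * Complex.I) = ⟨x + r * cos t, clampY (y + r * sin t)⟩ := by
      intro t
      rw [hcl]
      apply Complex.ext <;> simp [Complex.exp_ofReal_mul_I_re, Complex.exp_ofReal_mul_I_im]
    simp only [e1] at h3
    simp only [hV]
    rw [intervalIntegral.integral_sub (continuous_const.intervalIntegrable _ _), mul_sub, avg_const, hcl0]
    · linarith
    · apply Continuous.intervalIntegrable
      exact hwc.comp (by fun_prop : Continuous fun t : ℝ => (x + r * cos t, y + r * sin t))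
  have d1 := bb_decay V B hBpos hVc h0 h2 hsub k hk
  have d2 := bb_const B hBpos k hk
  have hchr := chr_cont k
  have hwx : Continuous fun x : ℝ => w x := by
    apply hw.1.comp_continuous Complex.continuous_ofReal
    intro x; simp
  have e : ∫ x in (-(1/2 : ℝ))..(1/2), w x • chr k x = bb (fun _ _ => B) k 0 - bb V k 0 := by
    unfold bb
    rw [← intervalIntegral.integral_sub]
    · congr 1; ext x
      simp only [hV]
      rw [← sub_smul, sub_sub_cancel, clampY_eq 0 (by norm_num)]
      rfl
    · exact Continuous.intervalIntegrable (by fun_prop) _ _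
    · exact Continuous.intervalIntegrable (Continuous.smul (hVc.comp (by fun_prop : Continuous fun x : ℝ => (x, (0:ℝ)))) hchr) _ _
  rw [e]
  refine (norm_sub_le _ _).trans ?_
  have : 2000 * B / |(k:ℝ)| = 1000 * B / |(k:ℝ)| + 1000 * B / |(k:ℝ)| := by ring
  linarith

end LDT

namespace LDT
open Real

lemma sum_symm_succ {E : Type*} [AddCommMonoid E] (g : ℤ → E) (N : ℕ) :
    ∑ n ∈ Finset.Icc (-((N + 1 : ℕ) : ℤ)) ((N + 1 : ℕ) : ℤ), g n =
      (∑ n ∈ Finset.Icc (-(N : ℤ)) (N : ℤ), g n) + (g ((N + 1 : ℕ) : ℤ) + g (-((N + 1 : ℕ) : ℤ))) := by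
  have : Finset.Icc (-((N + 1 : ℕ) : ℤ)) ((N + 1 : ℕ) : ℤ) =
      insert ((N + 1 : ℕ) : ℤ) (insert (-((N + 1 : ℕ) : ℤ)) (Finset.Icc (-(N : ℤ)) (N : ℤ))) := by
    ext n; simp only [Finset.mem_Icc, Finset.mem_insert]; push_cast; omega
  rw [this, Finset.sum_insert, Finset.sum_insert]
  · rw [← add_assoc, add_comm]
  · simp only [Finset.mem_Icc]; push_cast; omega
  · simp only [Finset.mem_Icc, Finset.mem_insert]; push_cast; omega

lemma tail_sum (K : ℕ) (hK : 0 < K) (s : Finset ℤ) :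
    ∑ n ∈ s, (if |n| ≤ (K : ℤ) then (0:ℝ) else 1 / (n:ℝ) ^ 2) ≤ 2 / K := by
  set g : ℤ → ℝ := fun n => if |n| ≤ (K : ℤ) then (0:ℝ) else 1 / (n:ℝ) ^ 2 with hg
  have g0 : ∀ n, 0 ≤ g n := fun n => by simp only [hg]; split_ifs <;> positivity
  have key : ∀ N : ℕ, K ≤ N → ∑ n ∈ Finset.Icc (-(N : ℤ)) (N : ℤ), g n ≤ 2 / K - 2 / N := by
    intro N hN
    induction N, hN using Nat.le_induction with
    | base =>
      rw [sub_self]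
      apply le_of_eq
      apply Finset.sum_eq_zero
      intro n hn
      rw [Finset.mem_Icc] at hn
      simp only [hg]; rw [if_pos (abs_le.mpr hn)]
    | succ N hN ih =>
      rw [sum_symm_succ]
      have hNpos : (0:ℝ) < N := by exact_mod_cast lt_of_lt_of_le hK hN
      have e1 : g ((N + 1 : ℕ) : ℤ) ≤ 1 / ((N:ℝ) + 1) ^ 2 := by
        simp only [hg]; split_ifs
        · positivity
        · push_cast; exact le_refl _
      have e2 : g (-((N + 1 : ℕ) : ℤ)) ≤ 1 / ((N:ℝ) + 1) ^ 2 := by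
        simp only [hg]; split_ifs
        · positivity
        · push_cast; apply le_of_eq; congr 1; ring
      have e3 : 1 / ((N:ℝ) + 1) ^ 2 ≤ 1 / N - 1 / (N + 1) := by
        rw [div_sub_div _ _ hNpos.ne' (by positivity), div_le_div_iff₀ (by positivity) (by positivity)]
        nlinarith
      have e4 : (2:ℝ) / N = 2 * (1 / N) := by ring
      have e5 : (2:ℝ) / ((N + 1 : ℕ) : ℝ) = 2 * (1 / (N + 1)) := by push_cast; ring
      rw [e5]; rw [e4] at ih
      linarith
  obtain ⟨N, hN⟩ : ∃ N : ℕ, K ≤ N ∧ s ⊆ Finset.Icc (-(N : ℤ)) (N : ℤ) := by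
    refine ⟨max K (s.sup Int.natAbs), le_max_left _ _, fun n hn => ?_⟩
    have h1 : n.natAbs ≤ s.sup Int.natAbs := Finset.le_sup (f := Int.natAbs) hn
    have h2 := le_max_right K (s.sup Int.natAbs)
    rw [Finset.mem_Icc]; omega
  refine (Finset.sum_le_sum_of_subset_of_nonneg hN.2 fun n _ _ => g0 n).trans ((key N hN.1).trans ?_)
  have : (0:ℝ) ≤ 2 / N := by positivity
  linarith

noncomputable def cf (v : ℝ → ℝ) (k : ℤ) : ℂ := ∫ x in (-(1/2 : ℝ))..(1/2), v x • chr k x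

lemma tail_meas (v : ℝ → ℝ) (hv : Continuous v) (hp : Function.Periodic v 1) (D η : ℝ) (K : ℕ)
    (hK : 0 < K) (hη : 0 < η) (hcoef : ∀ k : ℤ, k ≠ 0 → ‖cf v k‖ ≤ D / |(k:ℝ)|)
    (hsum : ∑ k ∈ Finset.Icc (-(K:ℤ)) (K:ℤ), ‖cf v k‖ ≤ η) :
    volume {x : ℝ | x ∈ Set.Icc (0:ℝ) 1 ∧ 2 * η < |v x|} ≤ ENNReal.ofReal (2 * D ^ 2 / (K * η ^ 2)) := by
  have : Fact ((0:ℝ) < 1) := ⟨one_pos⟩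
  have hpc : Function.Periodic (fun x => (v x : ℂ)) 1 := fun x => by simp only [hp x]
  let F : C(AddCircle (1:ℝ), ℂ) := ⟨hpc.lift, by
    apply continuous_coinduced_dom.mpr
    exact Complex.continuous_ofReal.comp hv⟩
  have hF : ∀ x : ℝ, F (x : AddCircle (1:ℝ)) = (v x : ℂ) := fun x => rfl
  have hFc : ∀ k, fourierCoeff F k = cf v k := by
    intro k
    rw [fourierCoeff_eq_intervalIntegral _ _ (-(1/2)), cf]
    rw [show (-(1/2 : ℝ)) + 1 = 1/2 by norm_num, div_one, one_smul]
    congr 1; ext x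
    rw [hF x, fourier_coe_apply, chr, smul_eq_mul, mul_comm, Complex.real_smul]
    congr 2
    push_cast; ring
  let S := Finset.Icc (-(K:ℤ)) (K:ℤ)
  let R : C(AddCircle (1:ℝ), ℂ) := F + ∑ k ∈ S, (-cf v k) • fourier k
  have hRc : ∀ n, fourierCoeff R n = if n ∈ S then 0 else cf v n := by
    intro n
    have h1 : (⇑R : AddCircle (1:ℝ) → ℂ) = ⇑F + ∑ k ∈ S, (-cf v k) • ⇑(fourier (T := (1:ℝ)) k) := by
      ext x; simp [R]
    have hint : ∀ f : C(AddCircle (1:ℝ), ℂ), Integrable f (AddCircle.haarAddCircle (T := (1:ℝ))) := fun f =>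
      f.continuous.integrable_of_hasCompactSupport (HasCompactSupport.of_compactSpace _)
    rw [h1, fourierCoeff.add (hint F), fourierCoeff.sum]
    · rw [Pi.add_apply, Finset.sum_apply, hFc]
      simp_rw [fourierCoeff.const_smul, fourierCoeff_fourier]
      have h2 : ∑ k ∈ S, (-cf v k) • (Pi.single k (1:ℂ) : ℤ → ℂ) n = if n ∈ S then -cf v n else 0 := by
        rw [← Finset.sum_ite_eq S n (fun k => -cf v k)]
        apply Finset.sum_congr rfl
        intro k _
        rw [Pi.single_apply]
        split_ifs <;> simp
      rw [h2]; split_ifs <;> simp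
    · intro k _; exact (hint _).smul (-cf v k)
    · have := hint (∑ k ∈ S, (-cf v k) • fourier k)
      convert this using 1
      ext x; simp
  have hI : ∫ x in (0:ℝ)..1, ‖R (x : AddCircle (1:ℝ))‖ ^ 2 ≤ 2 * D ^ 2 / K := by
    have h1 := hasSum_sq_fourierCoeff (ContinuousMap.toLp (E := ℂ) 2 (AddCircle.haarAddCircle (T := (1:ℝ))) ℂ R)
    have h2 : ∫ t : AddCircle (1:ℝ), ‖(ContinuousMap.toLp (E := ℂ) 2 (AddCircle.haarAddCircle (T := (1:ℝ))) ℂ R) t‖ ^ 2 ∂AddCircle.haarAddCircle = ∫ x in (0:ℝ)..1, ‖R (x : AddCircle (1:ℝ))‖ ^ 2 := by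
      have h3 : ∫ t : AddCircle (1:ℝ), ‖(ContinuousMap.toLp (E := ℂ) 2 (AddCircle.haarAddCircle (T := (1:ℝ))) ℂ R) t‖ ^ 2 ∂AddCircle.haarAddCircle = ∫ t : AddCircle (1:ℝ), ‖R t‖ ^ 2 ∂AddCircle.haarAddCircle := by
        apply integral_congr_ae
        filter_upwards [ContinuousMap.coeFn_toLp (p := 2) (𝕜 := ℂ) (AddCircle.haarAddCircle (T := (1:ℝ))) R] with t ht
        rw [ht]
      rw [h3, AddCircle.integral_haarAddCircle]
      have h4 := AddCircle.intervalIntegral_preimage (1:ℝ) 0 (fun t => ‖R t‖ ^ 2)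
      rw [zero_add] at h4
      rw [h4]; simp
    rw [h2] at h1
    refine hasSum_le_of_sum_le h1 fun s => ?_
    have h5 : ∀ n, ‖fourierCoeff (ContinuousMap.toLp (E := ℂ) 2 (AddCircle.haarAddCircle (T := (1:ℝ))) ℂ R) n‖ ^ 2 ≤
        D ^ 2 * (if |n| ≤ (K : ℤ) then (0:ℝ) else 1 / (n:ℝ) ^ 2) := by
      intro n
      rw [fourierCoeff_toLp, hRc]
      by_cases hn : |n| ≤ (K : ℤ)
      · rw [if_pos hn, if_pos (Finset.mem_Icc.mpr (abs_le.mp hn))]; simp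
      · rw [if_neg hn, if_neg (fun h => hn (abs_le.mpr (Finset.mem_Icc.mp h)))]
        have hn0 : n ≠ 0 := by rintro rfl; simp at hn
        have := hcoef n hn0
        calc ‖cf v n‖ ^ 2 ≤ (D / |(n:ℝ)|) ^ 2 := by gcongr
          _ = D ^ 2 * (1 / (n:ℝ) ^ 2) := by rw [div_pow, sq_abs]; ring
    refine (Finset.sum_le_sum fun n _ => h5 n).trans ?_
    rw [← Finset.mul_sum]
    refine (mul_le_mul_of_nonneg_left (tail_sum K hK s) (sq_nonneg D)).trans (le_of_eq ?_)
    ring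
  have hRcont : Continuous fun x : ℝ => ‖R (x : AddCircle (1:ℝ))‖ ^ 2 := by
    have := R.continuous
    have h2 : Continuous fun x : ℝ => (x : AddCircle (1:ℝ)) := AddCircle.continuous_mk' 1
    exact ((this.comp h2).norm).pow 2
  have hcheb := mul_meas_ge_le_integral_of_nonneg (μ := volume.restrict (Set.Icc (0:ℝ) 1))
    (f := fun x : ℝ => ‖R (x : AddCircle (1:ℝ))‖ ^ 2) (Filter.Eventually.of_forall fun x => by positivity)
    (hRcont.continuousOn.integrableOn_compact isCompact_Icc) (η ^ 2)
  rw [integral_Icc_eq_integral_Ioc, ← intervalIntegral.integral_of_le zero_le_one] at hcheb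
  have hcheb2 : (volume.restrict (Set.Icc (0:ℝ) 1)).real {x : ℝ | η ^ 2 ≤ ‖R (x : AddCircle (1:ℝ))‖ ^ 2} ≤ 2 * D ^ 2 / (K * η ^ 2) := by
    have hKp : (0:ℝ) < K := by exact_mod_cast hK
    have h1 := hcheb.trans hI
    rw [le_div_iff₀ hKp] at h1
    rw [le_div_iff₀ (by positivity)]
    linarith
  have hms : MeasurableSet {x : ℝ | η ^ 2 ≤ ‖R (x : AddCircle (1:ℝ))‖ ^ 2} :=
    (isClosed_le continuous_const hRcont).measurableSet
  have hsubset : {x : ℝ | x ∈ Set.Icc (0:ℝ) 1 ∧ 2 * η < |v x|} ⊆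
      {x : ℝ | η ^ 2 ≤ ‖R (x : AddCircle (1:ℝ))‖ ^ 2} ∩ Set.Icc (0:ℝ) 1 := by
    rintro x ⟨hx, hvx⟩
    refine ⟨?_, hx⟩
    change η ^ 2 ≤ ‖R (x : AddCircle (1:ℝ))‖ ^ 2
    have h1 : R (x : AddCircle (1:ℝ)) = (v x : ℂ) + ∑ k ∈ S, (-cf v k) * fourier k (x : AddCircle (1:ℝ)) := by
      rw [← hF x]; simp [R, -fourier_apply]
    have h2 : ‖∑ k ∈ S, (-cf v k) * fourier k (x : AddCircle (1:ℝ))‖ ≤ η := by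
      refine (norm_sum_le _ _).trans (le_trans (le_of_eq ?_) hsum)
      apply Finset.sum_congr rfl
      intro k _
      rw [norm_mul, norm_neg, fourier_apply, Circle.norm_coe, mul_one]
    have h3 : ‖(v x : ℂ)‖ = |v x| := by simp
    have h4 : ‖(v x : ℂ)‖ ≤ ‖R (x : AddCircle (1:ℝ))‖ + ‖∑ k ∈ S, (-cf v k) * fourier k (x : AddCircle (1:ℝ))‖ := by
      have : (v x : ℂ) = R (x : AddCircle (1:ℝ)) - ∑ k ∈ S, (-cf v k) * fourier k (x : AddCircle (1:ℝ)) := by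
        rw [h1]; ring
      conv_lhs => rw [this]
      exact norm_sub_le _ _
    have h5 : η ≤ ‖R (x : AddCircle (1:ℝ))‖ := by linarith
    gcongr
  refine (measure_mono hsubset).trans ?_
  rw [← Measure.restrict_apply hms, ← ofReal_measureReal]
  exact ENNReal.ofReal_le_ofReal hcheb2

end LDT

namespace LDT
open Real

lemma chr_add (k : ℤ) (x y : ℝ) : chr k (x + y) = chr k x * chr k y := by
  unfold chr; rw [← Complex.exp_add]; congr 1; push_cast; ring

lemma chr_neg (k : ℤ) (x : ℝ) : chr k (-x) = (chr k x)⁻¹ := by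
  unfold chr; rw [← Complex.exp_neg]; congr 1; push_cast; ring

lemma chr_natmul (k : ℤ) (n : ℕ) (x : ℝ) : chr k (n * x) = chr k x ^ n := by
  unfold chr; rw [← Complex.exp_nat_mul]; congr 1; push_cast; ring

lemma chr_zero (x : ℝ) : chr 0 x = 1 := by simp [chr]

lemma chr_one (k : ℤ) : chr k 1 = 1 := by
  unfold chr
  rw [Complex.exp_eq_one_iff]
  exact ⟨-k, by push_cast; ring⟩

lemma chr_negk (k : ℤ) (x : ℝ) : chr (-k) x = (starRingEnd ℂ) (chr k x) := by
  unfold chr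
  rw [← Complex.exp_conj]; congr 1
  rw [map_mul, Complex.conj_ofReal, Complex.conj_I]; push_cast; ring

lemma chr_int (k : ℤ) (hk : k ≠ 0) : ∫ x in (-(1/2 : ℝ))..(1/2), chr k x = 0 := by
  have h1 : ∀ x : ℝ, chr k x = Complex.exp ((-(2 * π * k) * Complex.I : ℂ) * x) := by
    intro x; unfold chr; congr 1; push_cast; ring
  simp_rw [h1]
  have hc : (-(2 * π * k) * Complex.I : ℂ) ≠ 0 := by
    simp [hk, pi_ne_zero]
  rw [integral_exp_mul_complex hc, div_eq_zero_iff]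
  left
  rw [sub_eq_zero, Complex.exp_eq_exp_iff_exists_int]
  exact ⟨-k, by push_cast; ring⟩

lemma sum_symm {E : Type*} [AddCommGroup E] (g : ℤ → E) (N : ℕ) :
    ∑ n ∈ Finset.Icc (-(N : ℤ)) (N : ℤ), g n = g 0 + ((∑ l ∈ Finset.range N, g ((l:ℤ) + 1)) +
      ∑ l ∈ Finset.range N, g (-((l:ℤ) + 1))) := by
  induction N with
  | zero => simp
  | succ N ih =>
    rw [sum_symm_succ, ih, Finset.sum_range_succ, Finset.sum_range_succ]
    push_cast
    abel

lemma fejer_id (g : ℤ → ℂ) (M : ℕ) :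
    ∑ m ∈ Finset.Icc (-(M : ℤ) + 1) ((M : ℤ) - 1), ((M:ℂ) - ((|m| : ℤ) : ℂ)) * g m =
      ∑ j ∈ Finset.range M, ∑ l ∈ Finset.range M, g ((j:ℤ) - l) := by
  induction M with
  | zero => simp
  | succ M ih =>
    have e1 : ∑ m ∈ Finset.Icc (-((M + 1 : ℕ) : ℤ) + 1) (((M + 1 : ℕ) : ℤ) - 1), (((M + 1 : ℕ):ℂ) - ((|m| : ℤ) : ℂ)) * g m
       = (∑ m ∈ Finset.Icc (-(M : ℤ)) (M : ℤ), ((M:ℂ) - ((|m| : ℤ) : ℂ)) * g m) + ∑ m ∈ Finset.Icc (-(M : ℤ)) (M : ℤ), g m := by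
      rw [← Finset.sum_add_distrib]
      have : Finset.Icc (-((M + 1 : ℕ) : ℤ) + 1) (((M + 1 : ℕ) : ℤ) - 1) = Finset.Icc (-(M : ℤ)) (M : ℤ) := by
        ext n; simp only [Finset.mem_Icc]; push_cast; omega
      rw [this]
      apply Finset.sum_congr rfl
      intro m _; push_cast; ring
    have e2 : ∑ m ∈ Finset.Icc (-(M : ℤ)) (M : ℤ), ((M:ℂ) - ((|m| : ℤ) : ℂ)) * g m =
        ∑ m ∈ Finset.Icc (-(M : ℤ) + 1) ((M : ℤ) - 1), ((M:ℂ) - ((|m| : ℤ) : ℂ)) * g m := by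
      symm
      apply Finset.sum_subset
      · intro n; simp only [Finset.mem_Icc]; omega
      · intro n h1 h2
        have : |n| = M := by
          simp only [Finset.mem_Icc] at h1 h2
          rcases abs_cases n with h | h <;> omega
        rw [this]; simp
    rw [e1, e2, ih, sum_symm]
    simp_rw [Finset.sum_range_succ]
    rw [Finset.sum_add_distrib]
    have e3 : ∑ j ∈ Finset.range M, g ((j:ℤ) - (M:ℤ)) = ∑ l ∈ Finset.range M, g (-((l:ℤ) + 1)) := by
      rw [← Finset.sum_range_reflect]
      apply Finset.sum_congr rfl
      intro j hj
      rw [Finset.mem_range] at hj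
      congr 1; omega
    have e4 : ∑ l ∈ Finset.range M, g ((M:ℤ) - (l:ℤ)) = ∑ l ∈ Finset.range M, g ((l:ℤ) + 1) := by
      rw [← Finset.sum_range_reflect]
      apply Finset.sum_congr rfl
      intro j hj
      rw [Finset.mem_range] at hj
      congr 1; omega
    rw [e3, e4, sub_self]
    ring

noncomputable def wt (M : ℕ) (m : ℤ) : ℝ := ((M : ℝ) - |(m:ℝ)|) / (M : ℝ) ^ 2

noncomputable def fej (M : ℕ) (ω : ℝ) (k : ℤ) : ℂ :=
  ∑ m ∈ Finset.Icc (-(M : ℤ) + 1) ((M : ℤ) - 1), (wt M m : ℂ) * chr k (-(m * ω))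

lemma fej_eq (M : ℕ) (ω : ℝ) (k : ℤ) :
    fej M ω k = (1 / (M:ℂ) ^ 2) * ((∑ j ∈ Finset.range M, (chr k (-ω)) ^ j) * ∑ j ∈ Finset.range M, (chr k ω) ^ j) := by
  have h := fejer_id (fun m => chr k (-(m * ω))) M
  rw [Finset.sum_mul_sum]
  have e : ∀ j l : ℕ, chr k (-(((j:ℤ) - (l:ℤ) : ℤ) * ω)) = chr k (-ω) ^ j * chr k ω ^ l := by
    intro j l
    rw [← chr_natmul, ← chr_natmul, ← chr_add]; congr 1; push_cast; ring
  simp only [e] at h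
  rw [← h, fej, Finset.mul_sum]
  apply Finset.sum_congr rfl
  intro m _
  unfold wt
  have hc : ((|(m:ℝ)| : ℝ) : ℂ) = ((|m| : ℤ) : ℂ) := by
    rw [← Int.cast_abs]; exact Complex.ofReal_intCast _
  rw [Complex.ofReal_div, Complex.ofReal_sub, hc]
  push_cast
  ring

lemma fej_zero (M : ℕ) (hM : 0 < M) (ω : ℝ) : fej M ω 0 = 1 := by
  have : (M:ℂ) ≠ 0 := by exact_mod_cast hM.ne'
  rw [fej_eq]; simp [chr_zero]; field_simp

lemma geom_le_one (z : ℂ) (hz : ‖z‖ = 1) (M : ℕ) : ‖∑ j ∈ Finset.range M, z ^ j‖ ≤ M := by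
  refine (norm_sum_le _ _).trans ?_
  simp [hz]

lemma geom_le (z : ℂ) (hz : ‖z‖ = 1) (M : ℕ) (a : ℝ) (ha : 0 < a) (h : a ≤ ‖z - 1‖) :
    ‖∑ j ∈ Finset.range M, z ^ j‖ ≤ 2 / a := by
  have hz1 : z ≠ 1 := by rintro rfl; simp at h; linarith
  rw [geom_sum_eq hz1, norm_div]
  have : ‖z ^ M - 1‖ ≤ 2 := by
    refine (norm_sub_le _ _).trans ?_
    rw [norm_pow, hz]; norm_num
  gcongr

lemma fej_le_one (M : ℕ) (hM : 0 < M) (ω : ℝ) (k : ℤ) : ‖fej M ω k‖ ≤ 1 := by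
  have hM' : (0:ℝ) < M := by exact_mod_cast hM
  rw [fej_eq, norm_mul, norm_mul, norm_div, norm_one, norm_pow, Complex.norm_natCast,
    one_div, inv_mul_le_iff₀ (by positivity)]
  have h1 := geom_le_one (chr k (-ω)) (chr_norm _ _) M
  have h2 := geom_le_one (chr k ω) (chr_norm _ _) M
  calc _ ≤ (M:ℝ) * M := by gcongr
    _ = _ := by ring

lemma chr_sub_one (k : ℤ) (x : ℝ) : 4 * distToInt (k * x) ≤ ‖chr k x - 1‖ := by
  have h1 : chr k x = Complex.exp (Complex.I * ((-(2 * π * (k * x - round (k * x))) : ℝ) : ℂ)) := by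
    unfold chr
    rw [Complex.exp_eq_exp_iff_exists_int]
    exact ⟨-round (k * x), by push_cast; ring⟩
  rw [h1, Complex.norm_exp_I_mul_ofReal_sub_one]
  set y := k * x - round (k * x) with hy
  have h2 : |y| ≤ 1/2 := abs_sub_round _
  have h3 : |-(2 * π * y) / 2| = π * |y| := by
    rw [show -(2 * π * y) / 2 = -(π * y) by ring, abs_neg, abs_mul, abs_of_pos pi_pos]
  have h4 := mul_abs_le_abs_sin (x := -(2 * π * y) / 2) (by rw [h3]; nlinarith [pi_pos])
  rw [h3] at h4
  rw [norm_mul, norm_eq_abs, norm_eq_abs, abs_of_pos (by norm_num : (0:ℝ) < 2)]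
  unfold distToInt
  have : 2 / π * (π * |y|) = 2 * |y| := by field_simp
  rw [this] at h4
  linarith

lemma distToInt_le (θ : ℝ) (n : ℤ) : distToInt θ ≤ |θ - n| := round_le θ n

lemma distToInt_sub (a b : ℝ) : distToInt (a - b) ≤ distToInt a + distToInt b := by
  refine (distToInt_le (a - b) (round a - round b)).trans ?_
  unfold distToInt
  push_cast
  rw [show a - b - ((round a : ℝ) - round b) = (a - round a) - (b - round b) by ring]
  exact abs_sub _ _

lemma fej_small (M : ℕ) (hM : 0 < M) (ω : ℝ) (k : ℤ) (d : ℝ) (hd : 0 < d) (h : d ≤ distToInt (k * ω)) :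
    ‖fej M ω k‖ ≤ 1 / (4 * M ^ 2 * d ^ 2) := by
  have hM' : (0:ℝ) < M := by exact_mod_cast hM
  have h0 := chr_sub_one k ω
  have h1 := geom_le (chr k ω) (chr_norm _ _) M (4 * d) (by positivity) (by linarith)
  have h2 := geom_le (chr k (-ω)) (chr_norm _ _) M (4 * d) (by positivity) (by
    have : ‖chr k (-ω) - 1‖ = ‖chr k ω - 1‖ := by
      have hne : chr k ω ≠ 0 := by rw [← norm_ne_zero_iff, chr_norm]; norm_num
      rw [chr_neg, show (chr k ω)⁻¹ - 1 = -((chr k ω)⁻¹ * (chr k ω - 1)) by field_simp; ring,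
        norm_neg, norm_mul, norm_inv, chr_norm]; simp
    rw [this]; linarith)
  rw [fej_eq, norm_mul, norm_mul, norm_div, norm_one, norm_pow, Complex.norm_natCast]
  calc _ ≤ 1 / (M:ℝ) ^ 2 * ((2 / (4 * d)) * (2 / (4 * d))) := by gcongr
    _ = _ := by field_simp; norm_num

lemma fej_neg (M : ℕ) (ω : ℝ) (k : ℤ) : ‖fej M ω (-k)‖ = ‖fej M ω k‖ := by
  have : fej M ω (-k) = (starRingEnd ℂ) (fej M ω k) := by
    unfold fej
    rw [map_sum]
    apply Finset.sum_congr rfl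
    intro m _
    rw [map_mul, Complex.conj_ofReal, chr_negk]
  rw [this, Complex.norm_conj]

/-- counting lemma -/
lemma count_sum (f : ℕ → ℝ) (h1 : ∀ n, f n ≤ 1) (ε : ℝ) (hε : 0 ≤ ε) (L : ℕ) (hL : 0 < L)
    (ha : ∀ n, 0 < n → n ≤ L → f n ≤ ε)
    (hb : ∀ n n', n < n' → n' - n ≤ L → f n ≤ ε ∨ f n' ≤ ε) (K : ℕ) :
    ∑ n ∈ Finset.Icc 1 K, f n / n ≤ (ε + 1 / L) * ∑ n ∈ Finset.Icc 1 K, (1:ℝ) / n := by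
  classical
  have hL' : (0:ℝ) < L := by exact_mod_cast hL
  set Bad := (Finset.Icc 1 K).filter (fun n => ε < f n) with hBad
  have s1 : ∑ n ∈ Finset.Icc 1 K, f n / n ≤ (∑ n ∈ Finset.Icc 1 K, ε * (1 / n)) + ∑ n ∈ Bad, (1:ℝ) / n := by
    rw [hBad, Finset.sum_filter, ← Finset.sum_add_distrib]
    apply Finset.sum_le_sum
    intro n hn
    have hn0 : (0:ℝ) ≤ 1 / n := by positivity
    rw [div_eq_mul_one_div]
    split_ifs with hc
    · nlinarith [h1 n, mul_nonneg hε hn0]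
    · nlinarith
  have s2 : ∀ n ∈ Bad, (1:ℝ) / n ≤ (1 / L) * ∑ i ∈ Finset.Icc 1 K, if i ≤ n ∧ n < i + L then (1:ℝ) / i else 0 := by
    intro n hn
    rw [hBad, Finset.mem_filter, Finset.mem_Icc] at hn
    have hnL : L < n := by
      by_contra! hc
      exact absurd (ha n (by omega) hc) (not_le.mpr hn.2)
    rw [← Finset.sum_filter]
    have hset : (Finset.Icc 1 K).filter (fun i => i ≤ n ∧ n < i + L) = Finset.Ioc (n - L) n := by
      ext i; simp only [Finset.mem_filter, Finset.mem_Icc, Finset.mem_Ioc]; omega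
    rw [hset]
    have hn0 : (0:ℝ) < n := by exact_mod_cast (by omega : 0 < n)
    have : ∑ i ∈ Finset.Ioc (n - L) n, (1:ℝ) / n ≤ ∑ i ∈ Finset.Ioc (n - L) n, (1:ℝ) / i := by
      apply Finset.sum_le_sum
      intro i hi
      rw [Finset.mem_Ioc] at hi
      apply one_div_le_one_div_of_le
      · exact_mod_cast (by omega : 0 < i)
      · exact_mod_cast hi.2
    rw [Finset.sum_const, Nat.card_Ioc, show n - (n - L) = L by omega, nsmul_eq_mul] at this
    rw [one_div (L:ℝ), le_inv_mul_iff₀ hL']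
    exact this
  have s3 : ∑ n ∈ Bad, (1:ℝ) / n ≤ (1 / L) * ∑ i ∈ Finset.Icc 1 K, (1:ℝ) / i := by
    refine (Finset.sum_le_sum s2).trans ?_
    rw [← Finset.mul_sum, Finset.sum_comm]
    apply mul_le_mul_of_nonneg_left _ (by positivity)
    apply Finset.sum_le_sum
    intro i hi
    rw [← Finset.sum_filter, Finset.sum_const, nsmul_eq_mul]
    have hcard : (Bad.filter (fun n => i ≤ n ∧ n < i + L)).card ≤ 1 := by
      rw [Finset.card_le_one]
      intro a ha' b hb'
      rw [Finset.mem_filter, hBad, Finset.mem_filter] at ha' hb'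
      by_contra hne
      rcases lt_or_gt_of_ne hne with hlt | hlt
      · rcases hb a b hlt (by omega) with h | h
        · linarith [ha'.1.2]
        · linarith [hb'.1.2]
      · rcases hb b a hlt (by omega) with h | h
        · linarith [hb'.1.2]
        · linarith [ha'.1.2]
    have : ((Bad.filter (fun n => i ≤ n ∧ n < i + L)).card : ℝ) ≤ 1 := by exact_mod_cast hcard
    have hi0 : (0:ℝ) ≤ 1 / i := by positivity
    nlinarith
  rw [← Finset.mul_sum] at s1
  linarith [add_mul ε (1 / (L:ℝ)) (∑ n ∈ Finset.Icc 1 K, (1:ℝ) / n)]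

lemma fej_count (M : ℕ) (hM : 0 < M) (ω δ : ℝ) (hδ : 0 < δ) (L : ℕ) (hL : 0 < L)
    (hDC : ∀ n : ℕ, 0 < n → n ≤ L → δ ≤ distToInt (n * ω)) (K : ℕ) :
    ∑ n ∈ Finset.Icc 1 K, ‖fej M ω (n:ℤ)‖ / n ≤
      (1 / (M ^ 2 * δ ^ 2) + 1 / L) * ∑ n ∈ Finset.Icc 1 K, (1:ℝ) / n := by
  have hM' : (0:ℝ) < M := by exact_mod_cast hM
  have key : ∀ n : ℕ, δ / 2 ≤ distToInt (n * ω) → ‖fej M ω (n:ℤ)‖ ≤ 1 / (M ^ 2 * δ ^ 2) := by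
    intro n hn
    refine (fej_small M hM ω n (δ/2) (by positivity) (by exact_mod_cast hn)).trans (le_of_eq ?_)
    congr 1; ring
  apply count_sum (fun n => ‖fej M ω (n:ℤ)‖) (fun n => fej_le_one M hM ω n) _ (by positivity) L hL
  · intro n h1 h2
    apply key; linarith [hDC n h1 h2]
  · intro n n' h1 h2
    by_contra! hc
    have a1 : distToInt (n * ω) < δ / 2 := by
      by_contra! h; linarith [key n h, hc.1]
    have a2 : distToInt (n' * ω) < δ / 2 := by
      by_contra! h; linarith [key n' h, hc.2]
    have a3 := hDC (n' - n) (by omega) h2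
    have a4 := distToInt_sub (n' * ω) (n * ω)
    rw [Nat.cast_sub h1.le, sub_mul] at a3
    linarith

end LDT

namespace LDT
open Real

lemma chr_periodic (k : ℤ) : Function.Periodic (chr k) 1 := by
  intro x; rw [chr_add, chr_one, mul_one]

lemma cf_shift (u : ℝ → ℝ) (hp : Function.Periodic u 1) (k : ℤ) (a : ℝ) :
    cf (fun x => u (x + a)) k = chr k (-a) * cf u k := by
  unfold cf
  have h1 : ∀ x, u (x + a) • chr k x = chr k (-a) * (fun y => u y • chr k y) (x + a) := by
    intro x
    have : chr k x = chr k (-a) * chr k (x + a) := by rw [← chr_add]; congr 1; ring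
    simp only [Complex.real_smul]
    rw [this]; ring
  simp_rw [h1]
  rw [intervalIntegral.integral_const_mul]
  congr 1
  rw [intervalIntegral.integral_comp_add_right (fun y => u y • chr k y) a]
  have hper : Function.Periodic (fun y => u y • chr k y) 1 := by
    intro x; simp only [hp x, chr_periodic k x]
  have := hper.intervalIntegral_add_eq (-(1/2) + a) (-(1/2))
  rw [show -(1/2) + a + 1 = 1/2 + a by ring, show (-(1/2:ℝ)) + 1 = 1/2 by norm_num] at this
  exact this

noncomputable def av (M : ℕ) (ω : ℝ) (u : ℝ → ℝ) (x : ℝ) : ℝ :=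
  (∑ m ∈ Finset.Icc (-(M : ℤ) + 1) ((M : ℤ) - 1), wt M m * u (x + m * ω)) - ∫ t in (0:ℝ)..1, u t

lemma av_cont (M : ℕ) (ω : ℝ) (u : ℝ → ℝ) (hu : Continuous u) : Continuous (av M ω u) := by
  unfold av; fun_prop

lemma av_per (M : ℕ) (ω : ℝ) (u : ℝ → ℝ) (hp : Function.Periodic u 1) :
    Function.Periodic (av M ω u) 1 := by
  intro x
  unfold av
  congr 1
  apply Finset.sum_congr rfl
  intro m _
  rw [show x + 1 + m * ω = (x + m * ω) + 1 by ring, hp]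

lemma cf_av (M : ℕ) (ω : ℝ) (u : ℝ → ℝ) (hu : Continuous u) (hp : Function.Periodic u 1) (k : ℤ) :
    cf (av M ω u) k = fej M ω k * cf u k -
      ((∫ t in (0:ℝ)..1, u t : ℝ) : ℂ) * ∫ x in (-(1/2 : ℝ))..(1/2), chr k x := by
  have hc := chr_cont k
  have h0 : ∀ x, av M ω u x • chr k x =
      (∑ m ∈ Finset.Icc (-(M : ℤ) + 1) ((M : ℤ) - 1), (wt M m : ℂ) * (u (x + m * ω) • chr k x)) -
        ((∫ t in (0:ℝ)..1, u t : ℝ) : ℂ) * chr k x := by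
    intro x
    unfold av
    rw [Complex.real_smul, Complex.ofReal_sub, sub_mul, Complex.ofReal_sum, Finset.sum_mul]
    congr 1
    apply Finset.sum_congr rfl
    intro m _
    rw [Complex.real_smul]; push_cast; ring
  rw [cf]
  simp_rw [h0]
  rw [intervalIntegral.integral_sub, intervalIntegral.integral_finsetSum,
    intervalIntegral.integral_const_mul]
  · congr 1
    unfold fej
    rw [Finset.sum_mul]
    apply Finset.sum_congr rfl
    intro m _
    rw [intervalIntegral.integral_const_mul]
    have := cf_shift u hp k (m * ω)
    unfold cf at this ⊢
    rw [this]; ring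
  · intro m _
    apply Continuous.intervalIntegrable; fun_prop
  · apply Continuous.intervalIntegrable; fun_prop
  · apply Continuous.intervalIntegrable; fun_prop

lemma cf_av_ne (M : ℕ) (ω : ℝ) (u : ℝ → ℝ) (hu : Continuous u) (hp : Function.Periodic u 1)
    (k : ℤ) (hk : k ≠ 0) : cf (av M ω u) k = fej M ω k * cf u k := by
  rw [cf_av M ω u hu hp, chr_int k hk]; simp

lemma cf_av_zero (M : ℕ) (hM : 0 < M) (ω : ℝ) (u : ℝ → ℝ) (hu : Continuous u)
    (hp : Function.Periodic u 1) : cf (av M ω u) 0 = 0 := by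
  rw [cf_av M ω u hu hp, fej_zero M hM]
  unfold cf
  simp_rw [chr_zero, Complex.real_smul, mul_one]
  rw [intervalIntegral.integral_ofReal]
  have := hp.intervalIntegral_add_eq (-(1/2)) 0
  rw [show (-(1/2:ℝ)) + 1 = 1/2 by norm_num, zero_add] at this
  rw [this]
  simp
  norm_num

lemma sum_av (M : ℕ) (hM : 0 < M) (ω : ℝ) (u : ℝ → ℝ) (hu : Continuous u)
    (hp : Function.Periodic u 1) (D : ℝ)
    (hD : ∀ k : ℤ, k ≠ 0 → ‖cf u k‖ ≤ D / |(k:ℝ)|) (K : ℕ) :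
    ∑ k ∈ Finset.Icc (-(K:ℤ)) (K:ℤ), ‖cf (av M ω u) k‖ ≤
      2 * D * ∑ n ∈ Finset.Icc 1 K, ‖fej M ω (n:ℤ)‖ / n := by
  have e : ∑ n ∈ Finset.Icc 1 K, ‖fej M ω (n:ℤ)‖ / n =
      ∑ l ∈ Finset.range K, ‖fej M ω ((l:ℤ) + 1)‖ / ((l:ℝ) + 1) := by
    rw [Finset.range_eq_Ico,
      show Finset.Icc 1 K = Finset.Ico (0 + 1) (K + 1) by ext; simp [Finset.mem_Icc, Finset.mem_Ico],
      ← Finset.sum_Ico_add']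
    push_cast; rfl
  rw [sum_symm, cf_av_zero M hM ω u hu hp, norm_zero, zero_add, e, two_mul, add_mul,
    Finset.mul_sum]
  have hb : ∀ k : ℤ, k ≠ 0 → ‖cf (av M ω u) k‖ ≤ D * (‖fej M ω k‖ / |(k:ℝ)|) := by
    intro k hk
    rw [cf_av_ne M ω u hu hp k hk, norm_mul]
    calc _ ≤ ‖fej M ω k‖ * (D / |(k:ℝ)|) := by gcongr; exact hD k hk
      _ = _ := by ring
  apply add_le_add <;> apply Finset.sum_le_sum <;> intro l _
  · refine (hb _ (by omega)).trans (le_of_eq ?_)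
    push_cast
    rw [abs_of_nonneg (by positivity)]
  · refine (hb _ (by omega)).trans (le_of_eq ?_)
    rw [fej_neg]
    push_cast
    rw [abs_neg, abs_of_nonneg (by positivity)]

end LDT

namespace LDT
open Real

lemma harm_bound (K : ℕ) : ∑ n ∈ Finset.Icc 1 K, (1:ℝ) / n ≤ 1 + log K := by
  have h := harmonic_le_one_add_log K
  rw [harmonic_eq_sum_Icc] at h
  push_cast at h
  simpa using h

lemma main_est (A c B : ℝ) (hA : 1 ≤ A) (hc : 0 < c) (hB : 1 ≤ B) (M : ℕ) (hM : 0 < M)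
    (X : ℝ) (hX : X = (M:ℝ) ^ (1 / (50 * A))) (hX1 : 1 ≤ X)
    (hXa : 12 * (2000 * B) * (1 / c ^ 2 + 2) ≤ X) (hXb : 384 * (2000 * B) ^ 2 < X)
    (ω : ℝ) (hω : ∀ n : ℕ, 0 < n → n ≤ M → c * (n:ℝ) ^ (-A) ≤ distToInt (n * ω))
    (u : ℝ → ℝ) (hu : Continuous u) (hp : Function.Periodic u 1)
    (hD : ∀ k : ℤ, k ≠ 0 → ‖cf u k‖ ≤ 2000 * B / |(k:ℝ)|) :
    volume {x | x ∈ Set.Icc (0:ℝ) 1 ∧ X⁻¹ < |av M ω u x|} < ENNReal.ofReal (exp (-(1/2) * X)) := by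
  have hM0 : (0:ℝ) < M := by exact_mod_cast hM
  have hM1 : (1:ℝ) ≤ M := by exact_mod_cast hM
  have hX0 : 0 < X := by linarith
  have hA0 : 0 < A := by linarith
  set D := 2000 * B with hDdef
  have hD0 : 0 < D := by positivity
  set Y := X ^ 25 with hY
  have hY1 : 1 ≤ Y := one_le_pow₀ hX1
  have hY0 : 0 < Y := by linarith
  have hYM : Y = (M:ℝ) ^ (1 / (2 * A)) := by
    rw [hY, hX, ← rpow_natCast, ← rpow_mul hM0.le]; congr 1; push_cast; field_simp; norm_num
  have hYle : Y ≤ M := by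
    rw [hYM]
    calc _ ≤ (M:ℝ) ^ (1:ℝ) := by
          apply rpow_le_rpow_of_exponent_le hM1
          rw [div_le_one (by positivity)]; linarith
      _ = M := rpow_one _
  have hYA : Y ^ (-A) = (M:ℝ) ^ (-(1/2) : ℝ) := by
    rw [hYM, ← rpow_mul hM0.le]; congr 1; field_simp
  set δ := c * (M:ℝ) ^ (-(1/2) : ℝ) with hδ
  have hδ0 : 0 < δ := by positivity
  have hδ2 : (M:ℝ) ^ 2 * δ ^ 2 = c ^ 2 * M := by
    have : ((M:ℝ) ^ (-(1/2) : ℝ)) ^ 2 = (M:ℝ)⁻¹ := by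
      rw [← rpow_natCast, ← rpow_mul hM0.le, ← rpow_neg_one]; norm_num
    rw [hδ, mul_pow, this]; field_simp
  set L := ⌊Y⌋₊ with hL
  have hL0 : 0 < L := Nat.floor_pos.mpr hY1
  have hLY : (L:ℝ) ≤ Y := Nat.floor_le hY0.le
  have hLM : L ≤ M := by exact_mod_cast hLY.trans hYle
  have hL1 : (1:ℝ) ≤ L := by exact_mod_cast hL0
  have hL2 : Y ≤ 2 * L := by
    have := Nat.lt_floor_add_one Y
    rw [← hL] at this; linarith
  have hDC : ∀ n : ℕ, 0 < n → n ≤ L → δ ≤ distToInt (n * ω) := by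
    intro n h1 h2
    refine le_trans ?_ (hω n h1 (h2.trans hLM))
    rw [hδ, ← hYA]
    have hn0 : (0:ℝ) < n := by exact_mod_cast h1
    have hnY : (n:ℝ) ≤ Y := le_trans (by exact_mod_cast h2) hLY
    apply mul_le_mul_of_nonneg_left _ hc.le
    exact rpow_le_rpow_of_nonpos hn0 hnY (by linarith)
  set K := ⌈exp X⌉₊ with hK
  have hKX : exp X ≤ K := Nat.le_ceil _
  have hK0 : 0 < K := Nat.ceil_pos.mpr (exp_pos _)
  have hK0' : (0:ℝ) < K := by exact_mod_cast hK0
  have hlogK : log K ≤ X + 1 := by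
    rw [log_le_iff_le_exp hK0', exp_add]
    have h1 := Nat.ceil_lt_add_one (exp_pos X).le
    have h2 := add_one_le_exp (1:ℝ)
    have h3 := one_le_exp hX0.le
    rw [← hK] at h1
    nlinarith
  have hcount := fej_count M hM ω δ hδ0 L hL0 hDC K
  have hharm := harm_bound K
  have hcoefs : 1 / ((M:ℝ) ^ 2 * δ ^ 2) + 1 / L ≤ (1 / c ^ 2 + 2) / Y := by
    rw [hδ2, add_div]
    apply add_le_add
    · rw [div_div]
      apply one_div_le_one_div_of_le (by positivity)
      gcongr
    · rw [div_le_div_iff₀ (by positivity) hY0]; linarith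
  have hsum := sum_av M hM ω u hu hp D hD K
  have hsum2 : ∑ k ∈ Finset.Icc (-(K:ℤ)) (K:ℤ), ‖cf (av M ω u) k‖ ≤ X⁻¹ / 2 := by
    refine hsum.trans ?_
    have h3 : ∑ n ∈ Finset.Icc 1 K, ‖fej M ω (n:ℤ)‖ / n ≤ (1 / c ^ 2 + 2) / Y * (3 * X) := by
      refine hcount.trans ?_
      apply mul_le_mul hcoefs (by linarith) (by positivity) (by positivity)
    calc _ ≤ 2 * D * ((1 / c ^ 2 + 2) / Y * (3 * X)) := by gcongr
      _ = (12 * D * (1 / c ^ 2 + 2)) * (X / Y) / 2 := by ring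
      _ ≤ X * (X / Y) / 2 := by gcongr
      _ ≤ X⁻¹ / 2 := by
        gcongr
        rw [hY, ← one_div, ← mul_div_assoc, div_le_div_iff₀ (by positivity) hX0]
        calc X * X * X = X ^ 3 := by ring
          _ ≤ X ^ 25 := pow_le_pow_right₀ hX1 (by norm_num)
          _ = _ := by ring
  have hcoef : ∀ k : ℤ, k ≠ 0 → ‖cf (av M ω u) k‖ ≤ D / |(k:ℝ)| := by
    intro k hk
    rw [cf_av_ne M ω u hu hp k hk, norm_mul]
    have := fej_le_one M hM ω k
    calc _ ≤ 1 * (D / |(k:ℝ)|) := by gcongr; exact hD k hk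
      _ = _ := one_mul _
  have ht := tail_meas (av M ω u) (av_cont M ω u hu) (av_per M ω u hp) D (X⁻¹ / 2) K hK0
    (by positivity) hcoef hsum2
  rw [show 2 * (X⁻¹ / 2) = X⁻¹ by ring] at ht
  refine ht.trans_lt ?_
  apply (ENNReal.ofReal_lt_ofReal_iff (exp_pos _)).mpr
  rw [show 2 * D ^ 2 / (K * (X⁻¹ / 2) ^ 2) = 8 * D ^ 2 * X ^ 2 / K by field_simp; norm_num]
  rw [div_lt_iff₀ hK0']
  have h5 : X ^ 3 / 48 ≤ exp (X / 2) := by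
    have := pow_div_factorial_le_exp (x := X / 2) (by positivity) 3
    norm_num [Nat.factorial] at this
    refine le_trans (le_of_eq ?_) this
    ring
  calc 8 * D ^ 2 * X ^ 2 < X ^ 3 / 48 := by nlinarith [pow_pos hX0 2]
    _ ≤ exp (X / 2) := h5
    _ = exp (-(1/2) * X) * exp X := by rw [← exp_add]; congr 1; ring
    _ ≤ _ := by gcongr

end LDT

/-- Large deviation theorem for Fejér-type averages of subharmonic functions, under
the finite Diophantine condition `‖kω‖ > c·|k|^{-A}` for `0 < |k| ≤ M` only.
One may take `σ = 1/(50A)`. -/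
theorem large_deviation_subharmonic_finite_DC (A : ℝ) (hA : 1 ≤ A) :
    ∃ σ : ℝ, 0 < σ ∧ σ = 1 / (50 * A) ∧
      ∀ c B : ℝ, 0 < c → 1 ≤ B →
        ∃ ctil : ℝ, 0 < ctil ∧ ∃ M₀ : ℕ,
          ∀ M : ℕ, 0 < M → M₀ ≤ M →
          ∀ ω : ℝ,
            (∀ k : ℤ, k ≠ 0 → |k| ≤ (M : ℤ) →
              c * (|k| : ℝ) ^ (-A) < distToInt (k * ω)) →
          ∀ u : ℝ → ℝ, Function.Periodic u 1 → (∀ x : ℝ, |u x| ≤ 1) →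
          ∀ utilde : ℂ → ℝ,
            (∀ x : ℝ, utilde (x : ℂ) = u x) →
            Subharmonic {z : ℂ | |z.im| < 1} utilde →
            (∀ z : ℂ, |z.im| < 1 → |utilde z| ≤ B) →
            volume {x : ℝ | x ∈ Set.Icc (0:ℝ) 1 ∧
                (M : ℝ) ^ (-σ) <
                  |(∑ m ∈ Finset.Icc (-(M : ℤ) + 1) ((M : ℤ) - 1),
                      (((M : ℝ) - (|m| : ℝ)) / (M : ℝ) ^ 2) * u (x + m * ω))
                    - ∫ t in (0:ℝ)..1, u t|}
              < ENNReal.ofReal (Real.exp (-ctil * (M : ℝ) ^ σ)) := by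
  have hA0 : 0 < A := by linarith
  have hσ : 0 < 1 / (50 * A) := by positivity
  refine ⟨1 / (50 * A), hσ, rfl, ?_⟩
  intro c B hc hB
  refine ⟨1 / 2, by norm_num, ?_⟩
  have hT : Filter.Tendsto (fun M : ℕ => (M:ℝ) ^ (1 / (50 * A))) Filter.atTop Filter.atTop :=
    (tendsto_rpow_atTop hσ).comp tendsto_natCast_atTop_atTop
  have hev := (hT.eventually_ge_atTop 1).and ((hT.eventually_ge_atTop
    (12 * (2000 * B) * (1 / c ^ 2 + 2))).and (hT.eventually_gt_atTop (384 * (2000 * B) ^ 2)))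
  obtain ⟨M₀, hM₀⟩ := Filter.eventually_atTop.mp hev
  refine ⟨M₀, ?_⟩
  intro M hM hMM ω hω u hp _ w hwu hw hwb
  obtain ⟨h1, h2, h3⟩ := hM₀ M hMM
  have hu : Continuous u := by
    have e : u = fun x : ℝ => w (x : ℂ) := by ext x; exact (hwu x).symm
    rw [e]
    exact hw.1.comp_continuous Complex.continuous_ofReal (fun x => by simp)
  have hD : ∀ k : ℤ, k ≠ 0 → ‖LDT.cf u k‖ ≤ 2000 * B / |(k:ℝ)| := by
    intro k hk
    have := LDT.coef_bound B hB w hw hwb k hk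
    simp_rw [hwu] at this
    exact this
  have hω' : ∀ n : ℕ, 0 < n → n ≤ M → c * (n:ℝ) ^ (-A) ≤ distToInt (n * ω) := by
    intro n hn hnM
    have := hω (n:ℤ) (by omega) (by rw [abs_of_nonneg (by positivity)]; exact_mod_cast hnM)
    simp only [Int.cast_natCast, Nat.abs_cast] at this
    exact this.le
  have := LDT.main_est A c B hA hc hB M hM _ rfl h1 h2 h3 ω hω' u hu hp hD
  rw [Real.rpow_neg (by positivity)]
  exact this
end

section
/- Let ω, E ∈ ℝ, ε > 0, and let φ̂ : ℤ → ℂ satisfy ε·∑_{n∈ℤ}|φ̂(n)| < 1. Then for every positive integer N, ∫₀¹ (1/N)·log(|det B_N(x)| + 10^{−N}) dx > (1/2)·log(1+E²) − log 2 + log(1 − ε·∑_{n∈ℤ}|φ̂(n)|). -/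
open MeasureTheory

/-- The cosine-regularized matrix `B_N(x)`, with
`B_N(x)(n,n) = sin(π(x+nω)) + (ε·φ̂(0) - E)·cos(π(x+nω))` and
`B_N(x)(n,n') = ε·φ̂(n-n')·cos(π(x+nω))` for `n ≠ n'`. -/
noncomputable def BN (ω E ε : ℝ) (φh : ℤ → ℂ) (N : ℕ) (x : ℝ) :
    Matrix (Fin N) (Fin N) ℂ :=
  fun n n' =>
    if n = n' then
      (Real.sin (Real.pi * (x + n * ω)) : ℂ)
        + ((ε : ℂ) * φh 0 - (E : ℂ)) * (Real.cos (Real.pi * (x + n * ω)) : ℂ)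
    else (ε : ℂ) * φh ((n : ℤ) - (n' : ℤ)) * (Real.cos (Real.pi * (x + n * ω)) : ℂ)

theorem aux_jensen (P : Polynomial ℂ) (h0 : P.eval 0 ≠ 0) :
    Real.log ‖P.eval 0‖ ≤ Real.circleAverage (fun z => Real.log ‖P.eval z‖) 0 1 := by
  have han : ∀ U : Set ℂ, AnalyticOnNhd ℂ (fun z => P.eval z) U := fun U z _ =>
    P.differentiable.analyticAt z
  have hJ := MeromorphicOn.circleAverage_log_norm (c := 0) (R := 1) (f := fun z => P.eval z)
    one_ne_zero (han _).meromorphicOn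
  rw [hJ, (han Set.univ 0 trivial).meromorphicTrailingCoeffAt_of_ne_zero h0]
  have hd := MeromorphicOn.AnalyticOnNhd.divisor_nonneg (han (Metric.closedBall 0 |1|))
  have hs : 0 ≤ ∑ᶠ u, (MeromorphicOn.divisor (fun z => P.eval z)
      (Metric.closedBall (0:ℂ) |1|) u : ℝ) * Real.log (1 * ‖0 - u‖⁻¹) := by
    apply finsum_nonneg
    intro u
    by_cases hu : u ∈ Metric.closedBall (0:ℂ) |1|
    · apply mul_nonneg
      · exact_mod_cast hd u
      · have hu' : ‖u‖ ≤ 1 := by simpa using hu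
        by_cases hu0 : u = 0
        · simp [hu0]
        · apply Real.log_nonneg
          rw [zero_sub, norm_neg, one_mul]
          exact (one_le_inv₀ (norm_pos_iff.2 hu0)).2 hu'
    · rw [Function.locallyFinsuppWithin.apply_eq_zero_of_notMem _ hu]
      simp
  simp only [Real.log_one, mul_zero, add_zero]
  linarith

theorem aux_gersh {N : ℕ} (A : Matrix (Fin N) (Fin N) ℂ) (r : ℝ) (hr : 0 ≤ r)
    (h : ∀ k, r ≤ ‖A k k‖ - ∑ j ∈ Finset.univ.erase k, ‖A k j‖) : r ^ N ≤ ‖A.det‖ := by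
  rw [Matrix.det_eq_prod_roots_charpoly]
  have hcard : A.charpoly.roots.card = N := by
    rw [← (IsAlgClosed.splits A.charpoly).natDegree_eq_card_roots,
      Matrix.charpoly_natDegree_eq_dim, Fintype.card_fin]
  have hroot : ∀ μ ∈ A.charpoly.roots, r ≤ ‖μ‖ := by
    intro μ hμ
    have h1 : A.charpoly.IsRoot μ := Polynomial.isRoot_of_mem_roots hμ
    rw [← Matrix.charpoly_toLin', ← Module.End.hasEigenvalue_iff_isRoot_charpoly] at h1
    obtain ⟨k, hk⟩ := eigenvalue_mem_ball h1
    rw [mem_closedBall_iff_norm'] at hk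
    have := norm_sub_norm_le (A k k) μ
    linarith [h k]
  have key : ∀ s : Multiset ℂ, (∀ μ ∈ s, r ≤ ‖μ‖) → r ^ s.card ≤ ‖s.prod‖ := by
    intro s
    induction s using Multiset.induction_on with
    | empty => simp
    | cons a s ih =>
      intro hs
      rw [Multiset.card_cons, Multiset.prod_cons, norm_mul, pow_succ']
      exact mul_le_mul (hs a (by simp)) (ih fun μ hμ => hs μ (by simp [hμ]))
        (by positivity) (norm_nonneg _)
  have := key _ hroot
  rwa [hcard] at this

noncomputable def auxPM (ω E ε : ℝ) (φh : ℤ → ℂ) (N : ℕ) :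
    Matrix (Fin N) (Fin N) (Polynomial ℂ) :=
  fun n n' =>
    if n = n' then
      (Polynomial.C (Complex.exp (2 * Real.pi * Complex.I * (n * ω))) * Polynomial.X - 1)
      + Polynomial.C (Complex.I * (ε * φh 0 - E)) *
        (Polynomial.C (Complex.exp (2 * Real.pi * Complex.I * (n * ω))) * Polynomial.X + 1)
    else Polynomial.C (Complex.I * (ε * φh ((n : ℤ) - (n' : ℤ)))) *
        (Polynomial.C (Complex.exp (2 * Real.pi * Complex.I * (n * ω))) * Polynomial.X + 1)

theorem aux_eval_det (ω E ε : ℝ) (φh : ℤ → ℂ) (N : ℕ) (z : ℂ) :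
    (auxPM ω E ε φh N).det.eval z = ((auxPM ω E ε φh N).map (Polynomial.eval z)).det := by
  have := (Polynomial.evalRingHom z).map_det (auxPM ω E ε φh N)
  simpa using this

theorem aux_norm (ω E ε : ℝ) (φh : ℤ → ℂ) (N : ℕ) (x : ℝ) :
    ‖(BN ω E ε φh N x).det‖ =
      ‖(auxPM ω E ε φh N).det.eval (circleMap 0 1 (2 * Real.pi * x))‖ / 2 ^ N := by
  have hm : (auxPM ω E ε φh N).map (Polynomial.eval (circleMap 0 1 (2 * Real.pi * x))) =
      Matrix.of fun (i j : Fin N) => (2 * Complex.I * Complex.exp (((Real.pi * (x + i * ω) : ℝ) : ℂ)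
        * Complex.I)) * BN ω E ε φh N x i j := by
    ext i j
    set θ : ℝ := Real.pi * (x + i * ω) with hθ
    have e1 : Complex.exp (2 * Real.pi * Complex.I * (i * ω)) * circleMap 0 1 (2 * Real.pi * x)
        = Complex.exp (θ * Complex.I) * Complex.exp (θ * Complex.I) := by
      rw [circleMap_zero, Complex.ofReal_one, one_mul, ← Complex.exp_add, ← Complex.exp_add]
      congr 1
      rw [hθ]; push_cast; ring
    have e2 : Complex.exp (θ * Complex.I) * Complex.exp (-θ * Complex.I) = 1 := by
      rw [← Complex.exp_add]; simp
    have e3 : 2 * Complex.I * Complex.exp (θ * Complex.I) * Complex.sin θ =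
        Complex.exp (θ * Complex.I) * Complex.exp (θ * Complex.I) - 1 := by
      rw [Complex.sin]
      linear_combination (Complex.I ^ 2) * e2 -
        (Complex.exp (θ * Complex.I) * Complex.exp (θ * Complex.I) - 1) * Complex.I_sq
    have e4 : 2 * Complex.exp (θ * Complex.I) * Complex.cos θ =
        Complex.exp (θ * Complex.I) * Complex.exp (θ * Complex.I) + 1 := by
      rw [Complex.cos]
      linear_combination e2
    simp only [Matrix.map_apply, Matrix.of_apply, auxPM, BN, ← hθ]
    split_ifs with hij
    · simp only [Polynomial.eval_add, Polynomial.eval_sub, Polynomial.eval_mul,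
        Polynomial.eval_C, Polynomial.eval_X, Polynomial.eval_one, e1, Complex.ofReal_sin,
        Complex.ofReal_cos]
      linear_combination -e3 - (Complex.I * (ε * φh 0 - E)) * e4
    · simp only [Polynomial.eval_add, Polynomial.eval_mul,
        Polynomial.eval_C, Polynomial.eval_X, Polynomial.eval_one, e1, Complex.ofReal_cos]
      linear_combination -(Complex.I * (ε * φh ((i : ℤ) - (j : ℤ)))) * e4
  rw [aux_eval_det, hm, Matrix.det_mul_column, norm_mul, norm_prod]
  have : ∀ i : Fin N, ‖2 * Complex.I * Complex.exp (((Real.pi * (x + i * ω) : ℝ) : ℂ)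
        * Complex.I)‖ = 2 := by
    intro i
    rw [norm_mul, Complex.norm_exp_ofReal_mul_I]; simp
  simp only [this, Finset.prod_const, Finset.card_univ, Fintype.card_fin]
  field_simp

theorem aux_zero (ω E ε : ℝ) (hε : 0 < ε) (φh : ℤ → ℂ)
    (hsum : Summable fun n : ℤ => ‖φh n‖)
    (hsmall : ε * ∑' n : ℤ, ‖φh n‖ < 1) (N : ℕ) :
    (√(1 + E ^ 2) * (1 - ε * ∑' n : ℤ, ‖φh n‖)) ^ N ≤ ‖(auxPM ω E ε φh N).det.eval 0‖ := by
  rw [aux_eval_det]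
  apply aux_gersh
  · exact mul_nonneg (Real.sqrt_nonneg _) (by linarith)
  intro k
  have hS : ∑ j : Fin N, ‖φh ((k:ℤ) - (j:ℤ))‖ ≤ ∑' n : ℤ, ‖φh n‖ := by
    have hinj : Function.Injective fun j : Fin N => (k:ℤ) - (j:ℤ) := by
      intro a b hab
      have : (a:ℤ) = b := by simpa using hab
      exact Fin.ext (by exact_mod_cast this)
    have := hsum.sum_le_tsum (Finset.univ.map ⟨_, hinj⟩) (fun _ _ => norm_nonneg _)
    simpa using this
  rw [← Finset.add_sum_erase _ _ (Finset.mem_univ k), sub_self] at hS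
  have hoff : ∑ j ∈ Finset.univ.erase k, ‖(auxPM ω E ε φh N).map (Polynomial.eval 0) k j‖ =
      ε * ∑ j ∈ Finset.univ.erase k, ‖φh ((k:ℤ) - (j:ℤ))‖ := by
    rw [Finset.mul_sum]
    apply Finset.sum_congr rfl
    intro j hj
    have hj' : k ≠ j := (Finset.ne_of_mem_erase hj).symm
    simp [auxPM, hj', abs_of_pos hε]
  have hdiag : √(1 + E ^ 2) - ε * ‖φh 0‖ ≤ ‖(auxPM ω E ε φh N).map (Polynomial.eval 0) k k‖ := by
    have h1 : (auxPM ω E ε φh N).map (Polynomial.eval 0) k k =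
        (-1 - Complex.I * E) - (-(Complex.I * (ε * φh 0))) := by
      simp [auxPM]; ring
    have h2 : ‖(-1 - Complex.I * E : ℂ)‖ = √(1 + E ^ 2) := by
      rw [Complex.norm_def, Complex.normSq_apply]
      congr 1
      simp; ring
    have h3 : ‖-(Complex.I * (ε * φh 0))‖ = ε * ‖φh 0‖ := by
      simp [abs_of_pos hε]
    rw [h1, ← h2, ← h3]
    exact norm_sub_norm_le _ _
  rw [hoff]
  have h1 : 1 ≤ √(1 + E ^ 2) := Real.one_le_sqrt.2 (by nlinarith [sq_nonneg E])
  have h2 := mul_le_mul_of_nonneg_left hS hε.le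
  have h3 : 0 ≤ ε * ∑' n : ℤ, ‖φh n‖ := mul_nonneg hε.le (tsum_nonneg fun _ => norm_nonneg _)
  nlinarith

theorem mean_log_det_lower_bound
    (ω E ε : ℝ) (hε : 0 < ε) (φh : ℤ → ℂ)
    (hsum : Summable fun n : ℤ => ‖φh n‖)
    (hsmall : ε * ∑' n : ℤ, ‖φh n‖ < 1) (N : ℕ) (hN : 0 < N) :
    (1 / 2) * Real.log (1 + E ^ 2) - Real.log 2
        + Real.log (1 - ε * ∑' n : ℤ, ‖φh n‖)
      < ∫ x in (0:ℝ)..1,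
          (1 / (N : ℝ)) * Real.log (‖(BN ω E ε φh N x).det‖ + (10 : ℝ) ^ (-(N : ℤ))) := by
  set P := (auxPM ω E ε φh N).det with hP
  have hz := aux_zero ω E ε hε φh hsum hsmall N
  rw [← hP] at hz
  have hNr : (0:ℝ) < N := by exact_mod_cast hN
  have hs0 : 0 < √(1 + E ^ 2) := Real.sqrt_pos.2 (by positivity)
  have ht0 : 0 < 1 - ε * ∑' n : ℤ, ‖φh n‖ := by linarith
  have hpow : 0 < (√(1 + E ^ 2) * (1 - ε * ∑' n : ℤ, ‖φh n‖)) ^ N := by positivity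
  have h0 : P.eval 0 ≠ 0 := norm_pos_iff.1 (hpow.trans_le hz)
  have hP0 : P ≠ 0 := by rintro h; simp [h] at h0
  have hlog := Real.log_le_log hpow hz
  rw [Real.log_pow, Real.log_mul hs0.ne' ht0.ne', Real.log_sqrt (by positivity)] at hlog
  have hJ := hlog.trans (aux_jensen P h0)
  set δ : ℝ := (10 : ℝ) ^ (-(N : ℤ)) with hδ
  have hδ0 : 0 < δ := by positivity
  simp_rw [aux_norm, ← hP]
  rw [intervalIntegral.integral_comp_mul_left (c := 2 * Real.pi)
    (fun θ => (1 / (N : ℝ)) * Real.log (‖P.eval (circleMap 0 1 θ)‖ / 2 ^ N + δ))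
    Real.two_pi_pos.ne', mul_zero, mul_one]
  have hint : IntervalIntegrable (fun θ => Real.log ‖P.eval (circleMap 0 1 θ)‖) volume
      0 (2 * Real.pi) := by
    have := MeromorphicOn.circleIntegrable_log_norm (f := fun z => P.eval z) (c := 0) (R := 1)
      (AnalyticOnNhd.meromorphicOn fun z _ => P.differentiable.analyticAt z)
    exact this
  have hint1 : IntervalIntegrable (fun θ => (1 / (N:ℝ)) *
      (Real.log ‖P.eval (circleMap 0 1 θ)‖ - N * Real.log 2)) volume 0 (2 * Real.pi) :=
    (hint.sub (by simp)).const_mul _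
  have hint2 : IntervalIntegrable (fun θ => (1 / (N : ℝ)) *
      Real.log (‖P.eval (circleMap 0 1 θ)‖ / 2 ^ N + δ)) volume 0 (2 * Real.pi) := by
    apply Continuous.intervalIntegrable
    apply continuous_const.mul
    apply Continuous.log
    · exact ((P.continuous.comp (continuous_circleMap 0 1)).norm.div_const _).add
        continuous_const
    · intro θ; positivity
  have hae : ∀ᵐ θ ∂(volume.restrict (Set.Ioc 0 (2 * Real.pi))), (1 / (N:ℝ)) *
      (Real.log ‖P.eval (circleMap 0 1 θ)‖ - N * Real.log 2) < (1 / (N : ℝ)) *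
      Real.log (‖P.eval (circleMap 0 1 θ)‖ / 2 ^ N + δ) := by
    apply ae_restrict_of_ae
    have hc : ({z : ℂ | P.eval z = 0}).Countable := by
      apply (P.rootSet_finite ℂ).countable.mono
      intro z hz
      rw [Polynomial.mem_rootSet]
      exact ⟨hP0, by simpa using hz⟩
    have hc2 := (hc.preimage_circleMap 0 (R := 1) one_ne_zero).ae_notMem volume
    filter_upwards [hc2] with θ hθ
    have hne : P.eval (circleMap 0 1 θ) ≠ 0 := hθ
    have hpos : 0 < ‖P.eval (circleMap 0 1 θ)‖ := norm_pos_iff.2 hne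
    apply mul_lt_mul_of_pos_left _ (by positivity)
    rw [← Real.log_pow, ← Real.log_div hpos.ne' (by positivity)]
    exact Real.log_lt_log (by positivity) (by linarith)
  have hlt := intervalIntegral.integral_lt_integral_of_ae_le_of_measure_setOfPred_lt_ne_zero
    Real.two_pi_pos.le hint1 hint2 (hae.mono fun _ h => h.le) (by
      have hne : volume.restrict (Set.Ioc 0 (2 * Real.pi)) ≠ 0 := by
        rw [Ne, Measure.restrict_eq_zero]
        simp [Real.pi_pos]
      have : (ae (volume.restrict (Set.Ioc 0 (2 * Real.pi)))).NeBot := ae_neBot.2 hne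
      exact frequently_ae_iff.1 hae.frequently)
  rw [intervalIntegral.integral_const_mul, intervalIntegral.integral_sub hint (by simp),
    intervalIntegral.integral_const] at hlt
  rw [Real.circleAverage_def] at hJ
  simp only [smul_eq_mul, sub_zero] at hlt hJ ⊢
  refine lt_of_le_of_lt ?_ (mul_lt_mul_of_pos_left hlt (inv_pos.2 Real.two_pi_pos))
  have hpi := Real.pi_pos
  generalize (∫ θ in (0:ℝ)..2 * Real.pi, Real.log ‖P.eval (circleMap 0 1 θ)‖) = J at hJ ⊢
  have e : (2 * Real.pi)⁻¹ * (1 / (N:ℝ) * (J - 2 * Real.pi * (N * Real.log 2))) =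
      (1 / (N:ℝ)) * ((2 * Real.pi)⁻¹ * J) - Real.log 2 := by
    field_simp
  rw [e]
  have h5 := mul_le_mul_of_nonneg_left hJ (one_div_pos.2 hNr).le
  rw [← mul_assoc, one_div_mul_cancel hNr.ne', one_mul] at h5
  linarith
end

section
/- Let ρ > 0, 0 < c₀ ≤ ρ, 0 < ε < 1, C₁ ≥ 1 and C̄ > 0. Let φ̂ : ℤ → ℂ satisfy |φ̂(n)| < e^{−ρ|n|} and φ̂(−n) = conj(φ̂(n)) for all n, let x₀, ω ∈ ℝ with x₀ + nω − 1/2 ∉ ℤ for all n ∈ ℤ, let E ∈ ℝ, and let ξ : ℤ → ℂ satisfy ξ_0 = 1, |ξ_n| ≤ C̄·(1+|n|) for all n, and the eigenvalue equation tan(π(x₀+nω))·ξ_n + ε·∑_{k∈ℤ} φ̂(n−k)·ξ_k = E·ξ_n for all n ∈ ℤ. Let N be sufficiently large (depending on ρ, c₀, C₁, C̄), let j₀ ∈ ℤ with N/2 ≤ j₀ ≤ N^{C₁}, and assume |ξ_n| ≤ e^{−c₀·N/3} for all n with j₀ < |n| ≤ j₀ + N/2. Then the Hermitian matrix H_{[−j₀,j₀]}(x₀)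 has an eigenvalue E' with |E − E'| < e^{−c₀·N/5}. -/
/-- The long-range Maryland operator restricted to a finite set `Λ ⊂ ℤ`:
`H_Λ(x)(n,n') = tan(π(x+nω))·δ_{nn'} + ε·φ̂(n-n')`. -/
noncomputable def Hmat (x ω ε : ℝ) (φh : ℤ → ℂ) (Λ : Finset ℤ) : Matrix Λ Λ ℂ :=
  fun n n' => (if (n : ℤ) = (n' : ℤ) then (Real.tan (Real.pi * (x + (n : ℤ) * ω)) : ℂ) else 0)
    + (ε : ℂ) * φh ((n : ℤ) - (n' : ℤ))

lemma aux_hermitian {ι : Type*} [Fintype ι] [DecidableEq ι] (A : Matrix ι ι ℂ)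
    (hA : A.IsHermitian) (E δ : ℝ) (v : ι → ℂ) (i₀ : ι) (hv : v i₀ = 1) 
    (hr : ∑ i, ‖(A.mulVec v - (E : ℂ) • v) i‖ < δ) :
    ∃ E' : ℝ, (A - (E' : ℂ) • 1).det = 0 ∧ |E - E'| < δ := by
  classical
  have hδ : 0 < δ := lt_of_le_of_lt (Finset.sum_nonneg fun i _ => norm_nonneg _) hr
  by_contra hcon
  push Not at hcon
  have hbig : ∀ i, δ ≤ |E - hA.eigenvalues i| := by
    intro i
    apply hcon
    rw [← Matrix.exists_mulVec_eq_zero_iff]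
    refine ⟨(hA.eigenvectorBasis i).ofLp, ?_, ?_⟩
    · intro h
      have h1 : hA.eigenvectorBasis i = 0 := by
        ext j; simpa using congrFun h j
      have h2 := hA.eigenvectorBasis.orthonormal.1 i
      rw [h1] at h2; simp at h2
    · rw [Matrix.sub_mulVec, hA.mulVec_eigenvectorBasis, Matrix.smul_mulVec, Matrix.one_mulVec]
      ext j; simp
  set w : EuclideanSpace ℂ ι := WithLp.toLp 2 v with hw
  set r : EuclideanSpace ℂ ι := WithLp.toLp 2 (A.mulVec v - (E : ℂ) • v) with hrdef
  have hinner : ∀ i, inner ℂ (hA.eigenvectorBasis i) r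
      = ((hA.eigenvalues i - E : ℝ) : ℂ) * inner ℂ (hA.eigenvectorBasis i) w := by
    intro i
    have h1 : star (hA.eigenvectorBasis i).ofLp ⬝ᵥ A.mulVec v
       = (hA.eigenvalues i : ℂ) * (star (hA.eigenvectorBasis i).ofLp ⬝ᵥ v) := by
      rw [Matrix.dotProduct_mulVec]
      have h3 : Matrix.vecMul (star (hA.eigenvectorBasis i).ofLp) A
          = star (A.mulVec (hA.eigenvectorBasis i).ofLp) := by
        rw [Matrix.star_mulVec, hA.eq]
      rw [h3, hA.mulVec_eigenvectorBasis]
      have h4 : star (hA.eigenvalues i • (hA.eigenvectorBasis i).ofLp)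
         = (hA.eigenvalues i : ℂ) • star (hA.eigenvectorBasis i).ofLp := by
        ext j; simp
      rw [h4, smul_dotProduct, smul_eq_mul]
    rw [hrdef, hw, EuclideanSpace.inner_eq_star_dotProduct, EuclideanSpace.inner_eq_star_dotProduct]
    rw [dotProduct_comm, dotProduct_comm v, dotProduct_sub, h1, dotProduct_smul, smul_eq_mul]
    push_cast
    ring
  have hw1 : 1 ≤ ‖w‖ := by
    have := PiLp.norm_apply_le w i₀
    simpa [hw, hv] using this
  have hr1 : ‖r‖ < δ := by
    refine lt_of_le_of_lt ?_ hr
    have hsum : r = ∑ i, EuclideanSpace.single i (r i) := by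
      ext j; simp [Finset.sum_apply]
    calc ‖r‖ = ‖∑ i, EuclideanSpace.single i (r i)‖ := by rw [← hsum]
      _ ≤ ∑ i, ‖EuclideanSpace.single i (r i)‖ := norm_sum_le _ _
      _ = _ := by simp [hrdef]
  have hsq : δ ^ 2 * ‖w‖ ^ 2 ≤ ‖r‖ ^ 2 := by
    rw [← hA.eigenvectorBasis.sum_sq_norm_inner_right w, 
      ← hA.eigenvectorBasis.sum_sq_norm_inner_right r, Finset.mul_sum]
    refine Finset.sum_le_sum fun i _ => ?_
    rw [hinner i, norm_mul, mul_pow, Complex.norm_real, Real.norm_eq_abs, abs_sub_comm]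
    gcongr
    exact hbig i
  have : δ * ‖w‖ ≤ ‖r‖ := by
    rw [← mul_pow] at hsq
    exact (sq_le_sq₀ (by positivity) (by positivity)).1 hsq
  nlinarith

lemma aux_summable (a : ℝ) (ha : 0 < a) :
    Summable (fun m : ℤ => (1 + |(m : ℝ)|) * Real.exp (-a * |(m : ℝ)|)) := by
  have h : Summable (fun n : ℕ => (1 + (n : ℝ)) * Real.exp (-a * (n : ℝ))) := by
    have h0 := Real.summable_pow_mul_exp_neg_nat_mul 0 ha
    have h1 := Real.summable_pow_mul_exp_neg_nat_mul 1 ha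
    refine (h0.add h1).congr fun n => ?_
    ring
  apply Summable.of_nat_of_neg
  · simpa using h
  · simpa using h

lemma aux_large (ρ c₀ C₁ K : ℝ) (hc₀ : 0 < c₀) :
    ∃ N₀ : ℕ, ∀ N : ℕ, N₀ ≤ N → 1 ≤ N ∧
      K * ((N : ℝ) ^ C₁) ^ 2 * Real.exp (-c₀ * N / 3) < Real.exp (-c₀ * N / 5) := by
  have h := (tendsto_rpow_mul_exp_neg_mul_atTop_nhds_zero (C₁ * 2) (c₀ * (2 / 15))
    (by positivity)).comp (tendsto_natCast_atTop_atTop (R := ℝ))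
  have h2 := h.const_mul K
  rw [mul_zero] at h2
  have h3 := (h2.eventually_lt_const one_pos).and (Filter.eventually_ge_atTop 1)
  obtain ⟨N₀, hN₀⟩ := Filter.eventually_atTop.1 h3
  refine ⟨N₀, fun N hN => ⟨(hN₀ N hN).2, ?_⟩⟩
  have h4 := (hN₀ N hN).1
  simp only [Function.comp] at h4
  have e1 : ((N : ℝ) ^ C₁) ^ 2 = (N : ℝ) ^ (C₁ * 2) := by
    rw [Real.rpow_mul (by positivity)]; norm_cast
  have e2 : Real.exp (-c₀ * N / 3) = Real.exp (-(c₀ * (2 / 15)) * N) * Real.exp (-c₀ * N / 5) := by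
    rw [← Real.exp_add]; congr 1; ring
  rw [e1, e2]
  have := Real.exp_pos (-c₀ * N / 5)
  nlinarith

/-- If a normalized polynomially bounded generalized eigenfunction is already small
on the annulus `j₀ < |n| ≤ j₀ + N/2`, then the energy `E` is exponentially close to
an eigenvalue of the (Hermitian) restriction `H_{[-j₀,j₀]}(x₀)`. -/
theorem energy_close_to_finite_volume_spectrum
    (ρ c₀ ε C₁ Cbar : ℝ) (hρ : 0 < ρ) (hc₀ : 0 < c₀) (hc₀ρ : c₀ ≤ ρ)
    (hε : 0 < ε) (hε1 : ε < 1) (hC₁ : 1 ≤ C₁) (hCbar : 0 < Cbar) :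
    ∃ N₀ : ℕ, ∀ N : ℕ, N₀ ≤ N →
      ∀ φh : ℤ → ℂ,
        (∀ n : ℤ, ‖φh n‖ < Real.exp (-ρ * |(n : ℝ)|)) →
        (∀ n : ℤ, φh (-n) = starRingEnd ℂ (φh n)) →
      ∀ x₀ ω : ℝ, (∀ n m : ℤ, x₀ + n * ω - 1/2 ≠ (m : ℝ)) →
      ∀ E : ℝ, ∀ ξ : ℤ → ℂ, ξ 0 = 1 →
        (∀ n : ℤ, ‖ξ n‖ ≤ Cbar * (1 + |(n : ℝ)|)) →
        (∀ n : ℤ, (Real.tan (Real.pi * (x₀ + n * ω)) : ℂ) * ξ n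
            + (ε : ℂ) * ∑' k : ℤ, φh (n - k) * ξ k = (E : ℂ) * ξ n) →
      ∀ j₀ : ℤ, (N : ℝ) / 2 ≤ (j₀ : ℝ) → (j₀ : ℝ) ≤ (N : ℝ) ^ C₁ →
        (∀ n : ℤ, (j₀ : ℝ) < (|n| : ℝ) → (|n| : ℝ) ≤ (j₀ : ℝ) + (N : ℝ) / 2 →
          ‖ξ n‖ ≤ Real.exp (-c₀ * N / 3)) →
        ∃ E' : ℝ,
          (Hmat x₀ ω ε φh (Finset.Icc (-j₀) j₀) - (E' : ℂ) • 1).det = 0 ∧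
          |E - E'| < Real.exp (-c₀ * N / 5) := by
  set g : ℤ → ℝ := fun m => (1 + |(m : ℝ)|) * Real.exp (-(ρ / 3) * |(m : ℝ)|) with hg
  have hgs : Summable g := aux_summable (ρ / 3) (by positivity)
  have hg0 : ∀ m, 0 ≤ g m := fun m => by simp only [hg]; positivity
  set S : ℝ := ∑' m, g m with hS
  have hS0 : 0 ≤ S := tsum_nonneg hg0
  obtain ⟨N₀, hN₀⟩ := aux_large ρ c₀ C₁ (8 * ((1 + Cbar) * S)) hc₀
  refine ⟨N₀, fun N hN φh hφ hφs x₀ ω hx E ξ hξ0 hξ heig j₀ hj1 hj2 hsmall => ?_⟩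
  obtain ⟨hN1, hlarge⟩ := hN₀ N hN
  have hN1' : (1 : ℝ) ≤ N := by exact_mod_cast hN1
  have hj0 : (0 : ℝ) ≤ j₀ := by linarith
  have hj0z : 0 ≤ j₀ := by exact_mod_cast hj0
  have hgshift : ∀ n : ℤ, HasSum (fun k => g (n - k)) S := fun n =>
    (Equiv.subLeft n).hasSum_iff.2 hgs.hasSum
  have hmem : ∀ k : ℤ, k ∈ Finset.Icc (-j₀) j₀ ↔ |(k : ℝ)| ≤ j₀ := by
    intro k
    rw [Finset.mem_Icc, ← abs_le]
    norm_cast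
  have htri : ∀ n k : ℤ, 1 + |(k : ℝ)| ≤ (1 + |(n : ℝ)|) * (1 + |((n - k : ℤ) : ℝ)|) := by
    intro n k
    have h1 : |(k : ℝ)| ≤ |(n : ℝ)| + |((n - k : ℤ) : ℝ)| := by
      have := abs_sub (n : ℝ) ((n - k : ℤ) : ℝ)
      simpa using this
    nlinarith [abs_nonneg (n : ℝ), abs_nonneg ((n - k : ℤ) : ℝ),
      mul_nonneg (abs_nonneg (n : ℝ)) (abs_nonneg ((n - k : ℤ) : ℝ))]
  have hterm : ∀ n k : ℤ, ‖φh (n - k) * ξ k‖ ≤ Cbar * (1 + |(n : ℝ)|) * g (n - k) := by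
    intro n k
    rw [norm_mul]
    have h1 := (hφ (n - k)).le
    have h2 : Real.exp (-ρ * |((n - k : ℤ) : ℝ)|) ≤ Real.exp (-(ρ / 3) * |((n - k : ℤ) : ℝ)|) := by
      apply Real.exp_le_exp.2
      nlinarith [mul_nonneg hρ.le (abs_nonneg ((n - k : ℤ) : ℝ))]
    calc ‖φh (n - k)‖ * ‖ξ k‖ ≤ Real.exp (-(ρ / 3) * |((n - k : ℤ) : ℝ)|) *
          (Cbar * ((1 + |(n : ℝ)|) * (1 + |((n - k : ℤ) : ℝ)|))) := by
          gcongr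
          · exact h1.trans h2
          · exact (hξ k).trans (by gcongr; exact htri n k)
      _ = _ := by simp only [hg]; ring
  have hout : ∀ n k : ℤ, |(n : ℝ)| ≤ j₀ → ¬ |(k : ℝ)| ≤ j₀ → ‖φh (n - k) * ξ k‖ ≤
      (Real.exp (-c₀ * N / 3) * ((1 + Cbar) * (1 + j₀))) * g (n - k) := by
    intro n k hn hk
    push Not at hk
    have hm0 := abs_nonneg ((n - k : ℤ) : ℝ)
    by_cases hk2 : |(k : ℝ)| ≤ j₀ + (N : ℝ) / 2
    · rw [norm_mul]
      have h1 := (hφ (n - k)).le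
      have h2 : Real.exp (-ρ * |((n - k : ℤ) : ℝ)|) ≤ 
          Real.exp (-(ρ / 3) * |((n - k : ℤ) : ℝ)|) := by
        apply Real.exp_le_exp.2
        nlinarith [mul_nonneg hρ.le hm0]
      have h3 := hsmall k hk hk2
      have h4 : 1 ≤ ((1 + Cbar) * (1 + j₀)) * (1 + |((n - k : ℤ) : ℝ)|) := by
        apply one_le_mul_of_one_le_of_one_le
        · apply one_le_mul_of_one_le_of_one_le <;> linarith
        · linarith
      calc ‖φh (n - k)‖ * ‖ξ k‖ ≤ Real.exp (-(ρ / 3) * |((n - k : ℤ) : ℝ)|) *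
            Real.exp (-c₀ * N / 3) * 1 := by
            rw [mul_one]; gcongr; exact h1.trans h2
        _ ≤ Real.exp (-(ρ / 3) * |((n - k : ℤ) : ℝ)|) *
            Real.exp (-c₀ * N / 3) * (((1 + Cbar) * (1 + j₀)) * (1 + |((n - k : ℤ) : ℝ)|)) := by
            gcongr
        _ = _ := by simp only [hg]; ring
    · push Not at hk2
      rw [norm_mul]
      have hm : (N : ℝ) / 2 ≤ |((n - k : ℤ) : ℝ)| := by
        have := abs_sub (n : ℝ) ((n - k : ℤ) : ℝ)
        push_cast at this ⊢
        rw [sub_sub_cancel] at this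
        linarith
      have h1 := (hφ (n - k)).le
      have h2 : Real.exp (-ρ * |((n - k : ℤ) : ℝ)|) ≤ 
          Real.exp (-(ρ / 3) * |((n - k : ℤ) : ℝ)|) * Real.exp (-c₀ * N / 3) := by
        rw [← Real.exp_add]
        apply Real.exp_le_exp.2
        have : c₀ * (N / 2) ≤ ρ * |((n - k : ℤ) : ℝ)| := by gcongr
        linarith
      calc ‖φh (n - k)‖ * ‖ξ k‖ ≤ 
            (Real.exp (-(ρ / 3) * |((n - k : ℤ) : ℝ)|) * Real.exp (-c₀ * N / 3)) *
          ((1 + Cbar) * ((1 + j₀) * (1 + |((n - k : ℤ) : ℝ)|))) := by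
            gcongr
            · exact h1.trans h2
            · refine (hξ k).trans ?_
              have h5 := htri n k
              have h6 : (1 + |(n : ℝ)|) * (1 + |((n - k : ℤ) : ℝ)|) ≤
                (1 + j₀) * (1 + |((n - k : ℤ) : ℝ)|) := by gcongr
              have h7 := h5.trans h6
              gcongr
              linarith
        _ = _ := by simp only [hg]; ring
  have hfs : ∀ n : ℤ, Summable (fun k => φh (n - k) * ξ k) := fun n =>
    Summable.of_norm_bounded ((hgshift n).summable.mul_left _) (hterm n)
  have hherm : (Hmat x₀ ω ε φh (Finset.Icc (-j₀) j₀)).IsHermitian := by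
    ext i j
    simp only [Matrix.conjTranspose_apply, Hmat, star_add, star_mul']
    congr 1
    · by_cases h : (i : ℤ) = j
      · simp only [h, if_true]
        exact Complex.conj_ofReal _
      · rw [if_neg h, if_neg (fun h' => h h'.symm), star_zero]
    · rw [← neg_sub (i : ℤ) j, hφs]
      simp
  set B : ℝ := (Real.exp (-c₀ * N / 3) * ((1 + Cbar) * (1 + j₀))) * S with hB
  have hB0 : 0 ≤ B := by positivity
  refine aux_hermitian _ hherm E _ (fun i => ξ i)
    ⟨0, by rw [Finset.mem_Icc]; omega⟩ hξ0 ?_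
  have hrow : ∀ i : Finset.Icc (-j₀) j₀,
      ‖((Hmat x₀ ω ε φh (Finset.Icc (-j₀) j₀)).mulVec (fun i => ξ i)
        - (E : ℂ) • (fun i : Finset.Icc (-j₀) j₀ => ξ i)) i‖ ≤ B := by
    intro i
    set h : ℤ → ℂ := fun k => if k ∈ Finset.Icc (-j₀) j₀ then 0 else φh (i - k) * ξ k with hh
    have hbound : ∀ k, ‖h k‖ ≤ (Real.exp (-c₀ * N / 3) * ((1 + Cbar) * (1 + j₀))) * g (i - k) := by
      intro k
      simp only [hh]
      split_ifs with hk
      · rw [norm_zero]; exact mul_nonneg (by positivity) (hg0 _)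
      · exact hout i k ((hmem _).1 i.2) (fun h' => hk ((hmem k).2 h'))
    have hnorm : ‖∑' k, h k‖ ≤ B :=
      tsum_of_norm_bounded ((hgshift i).mul_left _) hbound
    have hhs : Summable h := Summable.of_norm_bounded ((hgshift i).summable.mul_left _) hbound
    have hsplit : ∑' k, φh (i - k) * ξ k
        = ∑ k ∈ Finset.Icc (-j₀) j₀, φh (i - k) * ξ k + ∑' k, h k := by
      have hfin : HasSum (fun k => if k ∈ Finset.Icc (-j₀) j₀ then φh (i - k) * ξ k else 0)
          (∑ k ∈ Finset.Icc (-j₀) j₀, φh (i - k) * ξ k) := by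
        have := hasSum_sum_of_ne_finset_zero
          (f := fun k => if k ∈ Finset.Icc (-j₀) j₀ then φh (i - k) * ξ k else 0)
          (s := Finset.Icc (-j₀) j₀) (L := SummationFilter.unconditional ℤ) (fun b hb => if_neg hb)
        convert this using 1
        exact Finset.sum_congr rfl fun k hk => (if_pos hk).symm
      rw [← (hfin.add hhs.hasSum).tsum_eq]
      congr 1
      ext k
      simp only [hh]
      split_ifs <;> simp
    have hmul : (Hmat x₀ ω ε φh (Finset.Icc (-j₀) j₀)).mulVec (fun i => ξ i) i
        = (Real.tan (Real.pi * (x₀ + (i : ℤ) * ω)) : ℂ) * ξ i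
          + ε * ∑ k ∈ Finset.Icc (-j₀) j₀, φh (i - k) * ξ k := by
      rw [← Finset.sum_coe_sort (Finset.Icc (-j₀) j₀) (fun k => φh (i - k) * ξ k)]
      simp only [Matrix.mulVec, dotProduct, Hmat, add_mul, Finset.sum_add_distrib, ite_mul, zero_mul,
        Finset.mul_sum, mul_assoc]
      congr 1
      rw [Finset.sum_eq_single i]
      · simp
      · intro b _ hb
        rw [if_neg (fun h' => hb (Subtype.ext h'.symm))]
      · simp
    have hres : ((Hmat x₀ ω ε φh (Finset.Icc (-j₀) j₀)).mulVec (fun i => ξ i)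
        - (E : ℂ) • (fun i : Finset.Icc (-j₀) j₀ => ξ i)) i = -(ε * ∑' k, h k) := by
      rw [Pi.sub_apply, hmul, Pi.smul_apply, smul_eq_mul, ← heig i, hsplit]
      ring
    rw [hres, norm_neg, norm_mul, Complex.norm_real, Real.norm_eq_abs, abs_of_pos hε]
    nlinarith [norm_nonneg (∑' k, h k)]
  refine lt_of_le_of_lt (Finset.sum_le_sum fun i _ => hrow i) (lt_of_le_of_lt ?_ hlarge)
  rw [Finset.sum_const, nsmul_eq_mul, Finset.card_univ, Fintype.card_coe, Int.card_Icc]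
  have hcard : (((j₀ + 1 - -j₀).toNat : ℕ) : ℝ) = 2 * j₀ + 1 := by
    have : (((j₀ + 1 - -j₀).toNat : ℕ) : ℤ) = 2 * j₀ + 1 := by omega
    exact_mod_cast this
  rw [hcard, hB]
  set P := (N : ℝ) ^ C₁ with hP
  have hP1 : 1 ≤ P := Real.one_le_rpow hN1' (by linarith)
  have h1 : (2 * (j₀ : ℝ) + 1) * (1 + j₀) ≤ (4 * P) * (2 * P) := by
    gcongr <;> linarith
  have h2 : 0 ≤ Real.exp (-c₀ * N / 3) * ((1 + Cbar) * S) := by positivity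
  nlinarith [mul_le_mul_of_nonneg_left h1 h2]
end
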